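/- arXiv:2508.12468 — 2 statements merged into one kernel-verified Lean document; each statement's English description precedes it below -/
import Mathlib

section
/- For every complex number q with 0 < |q| < 1, one has ∑_{i,j,k,l ≥ 0} q^{2i²+2j²+2k²+2l²−2ij−2ik−2il+2jk+2jl−i+k−l} / ((q²;q²)_i (q²;q²)_j (q²;q²)_k (q²;q²)_l) = 2 J_2² / J_1². -/
open scoped BigOperators

/-- The infinite q-Pochhammer symbol `(a; q)_∞ = ∏_{k=0}^∞ (1 - a q^k)`. -/
noncomputable def qPochInf (a q : ℂ) : ℂ := ∏' n : ℕ, (1 - a * q ^ n)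

/-- The finite q-Pochhammer symbol `(a; q)_n = ∏_{k=0}^{n-1} (1 - a q^k)`. -/
noncomputable def qPoch (a q : ℂ) (n : ℕ) : ℂ :=
  Finset.prod (Finset.range n) (fun k => 1 - a * q ^ k)

/-- `J_m = (q^m; q^m)_∞`. -/
noncomputable def J (q : ℂ) (m : ℕ) : ℂ := qPochInf (q ^ m) (q ^ m)

/-- `J_{a,m} = (q^a; q^m)_∞ (q^{m-a}; q^m)_∞ (q^m; q^m)_∞`. -/
noncomputable def Jam (q : ℂ) (a m : ℕ) : ℂ :=
  qPochInf (q ^ a) (q ^ m) * qPochInf (q ^ (m - a)) (q ^ m) * qPochInf (q ^ m) (q ^ m)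


lemma qPoch_succ (a q : ℂ) (n : ℕ) : qPoch a q (n+1) = qPoch a q n * (1 - a * q ^ n) := by
  simp [qPoch, Finset.prod_range_succ]

lemma qPoch_zero (a q : ℂ) : qPoch a q 0 = 1 := by simp [qPoch]

lemma P_succ (q : ℂ) (n : ℕ) : qPoch q q (n+1) = qPoch q q n * (1 - q ^ (n+1)) := by
  rw [qPoch_succ, pow_succ']

lemma one_sub_pow_ne {q : ℂ} (h : ‖q‖ < 1) (n : ℕ) : 1 - q ^ (n+1) ≠ 0 := by
  intro h2
  have h3 : q ^ (n+1) = 1 := (sub_eq_zero.mp h2).symm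
  have h4 : ‖q‖ ^ (n+1) < 1 := pow_lt_one₀ (norm_nonneg _) h (by omega)
  rw [← norm_pow, h3] at h4
  simp at h4

lemma P_ne {q : ℂ} (h : ‖q‖ < 1) (n : ℕ) : qPoch q q n ≠ 0 := by
  induction n with
  | zero => simp [qPoch_zero]
  | succ n ih => rw [P_succ]; exact mul_ne_zero ih (one_sub_pow_ne h n)

lemma summ_geo {q : ℂ} (a : ℂ) (h : ‖q‖ < 1) : Summable (fun n : ℕ => ‖-(a * q ^ n)‖) := by
  simp only [norm_neg, norm_mul, norm_pow]
  exact (summable_geometric_of_lt_one (norm_nonneg _) h).mul_left _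

lemma mult_poch {q : ℂ} (a : ℂ) (h : ‖q‖ < 1) : Multipliable (fun n : ℕ => 1 - a * q ^ n) := by
  have := multipliable_one_add_of_summable (summ_geo a h)
  simpa [sub_eq_add_neg] using this

lemma qPoch_tendsto {q : ℂ} (a : ℂ) (h : ‖q‖ < 1) :
    Filter.Tendsto (qPoch a q) Filter.atTop (nhds (qPochInf a q)) :=
  (mult_poch a h).tendsto_prod_tprod_nat

lemma PInf_ne {q : ℂ} (h : ‖q‖ < 1) : qPochInf q q ≠ 0 := by
  have := tprod_one_add_ne_zero_of_summable (f := fun n : ℕ => -(q * q ^ n)) (by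
    intro n
    have := one_sub_pow_ne h n
    rw [pow_succ'] at this
    simpa [sub_eq_add_neg] using this) (summ_geo q h)
  simpa [qPochInf, sub_eq_add_neg] using this

lemma P_bound {q : ℂ} (h : ‖q‖ < 1) : ∃ C : ℝ, 1 ≤ C ∧ ∀ n, ‖(qPoch q q n)⁻¹‖ ≤ C := by
  have h1 := (qPoch_tendsto q h).inv₀ (PInf_ne h)
  obtain ⟨C, hC⟩ := (Metric.isBounded_range_of_tendsto _ h1).exists_norm_le
  refine ⟨max C 1, le_max_right _ _, fun n => le_trans (hC _ ⟨n, rfl⟩) (le_max_left _ _)⟩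

/-- q-Vandermonde. -/
lemma V_id {q : ℂ} (h : ‖q‖ < 1) (r : ℕ) : ∀ s : ℕ,
    ∑ t ∈ Finset.range (r+1), (if t ≤ s then q ^ ((r-t)*(s-t)) *
      ((qPoch q q t)⁻¹ * (qPoch q q (r-t))⁻¹ * (qPoch q q (s-t))⁻¹) else 0)
    = (qPoch q q r)⁻¹ * (qPoch q q s)⁻¹ := by
  induction r with
  | zero => intro s; simp [qPoch_zero]
  | succ r ih =>
    intro s
    have hr := one_sub_pow_ne h r
    have key : (1 - q^(r+1)) * ∑ t ∈ Finset.range (r+1+1), (if t ≤ s then q ^ ((r+1-t)*(s-t)) *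
      ((qPoch q q t)⁻¹ * (qPoch q q (r+1-t))⁻¹ * (qPoch q q (s-t))⁻¹) else 0)
      = (qPoch q q r)⁻¹ * (qPoch q q s)⁻¹ := by
      have split : ∀ t ∈ Finset.range (r+1+1), (1 - q^(r+1)) * (if t ≤ s then q ^ ((r+1-t)*(s-t)) *
          ((qPoch q q t)⁻¹ * (qPoch q q (r+1-t))⁻¹ * (qPoch q q (s-t))⁻¹) else 0)
          = (1 - q^t) * (if t ≤ s then q ^ ((r+1-t)*(s-t)) *
          ((qPoch q q t)⁻¹ * (qPoch q q (r+1-t))⁻¹ * (qPoch q q (s-t))⁻¹) else 0)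
          + q^t * (1 - q^(r+1-t)) * (if t ≤ s then q ^ ((r+1-t)*(s-t)) *
          ((qPoch q q t)⁻¹ * (qPoch q q (r+1-t))⁻¹ * (qPoch q q (s-t))⁻¹) else 0) := by
        intro t ht
        have : q^(r+1) = q^t * q^(r+1-t) := by
          rw [← pow_add]; congr 1; simp at ht; omega
        rw [this]; ring
      rw [Finset.mul_sum, Finset.sum_congr rfl split, Finset.sum_add_distrib]
      have e2 : ∑ t ∈ Finset.range (r+1+1), q^t * (1 - q^(r+1-t)) * (if t ≤ s then q ^ ((r+1-t)*(s-t)) *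
          ((qPoch q q t)⁻¹ * (qPoch q q (r+1-t))⁻¹ * (qPoch q q (s-t))⁻¹) else 0)
          = q^s * ((qPoch q q r)⁻¹ * (qPoch q q s)⁻¹) := by
        rw [Finset.sum_range_succ]
        simp only [Nat.sub_self, pow_zero, sub_self, mul_zero, zero_mul, add_zero]
        rw [← ih s, Finset.mul_sum]
        apply Finset.sum_congr rfl
        intro t ht
        have ht' : t ≤ r := by simp at ht; omega
        split_ifs with hts
        · obtain ⟨a, rfl⟩ := Nat.exists_eq_add_of_le ht'
          obtain ⟨b, rfl⟩ := Nat.exists_eq_add_of_le hts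
          have e1 : t + a + 1 - t = a + 1 := by omega
          simp only [e1, Nat.add_sub_cancel_left, P_succ]
          have := one_sub_pow_ne h a
          have := P_ne h a
          have := P_ne h b
          have := P_ne h t
          field_simp
          ring
        · simp
      have e1 : ∑ t ∈ Finset.range (r+1+1), (1 - q^t) * (if t ≤ s then q ^ ((r+1-t)*(s-t)) *
          ((qPoch q q t)⁻¹ * (qPoch q q (r+1-t))⁻¹ * (qPoch q q (s-t))⁻¹) else 0)
          = (1 - q^s) * ((qPoch q q r)⁻¹ * (qPoch q q s)⁻¹) := by
        rw [Finset.sum_range_succ']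
        simp only [pow_zero, sub_self, zero_mul, add_zero]
        cases s with
        | zero => simp
        | succ s =>
          have : (1 - q^(s+1)) * ((qPoch q q r)⁻¹ * (qPoch q q (s+1))⁻¹)
            = (qPoch q q r)⁻¹ * (qPoch q q s)⁻¹ := by
            rw [P_succ]
            have := one_sub_pow_ne h s
            have := P_ne h s
            have := P_ne h r
            field_simp
          rw [this, ← ih s]
          apply Finset.sum_congr rfl
          intro t ht
          simp only [Nat.add_le_add_iff_right, Nat.add_sub_add_right]
          split_ifs with hts
          · rw [P_succ]
            have := one_sub_pow_ne h t
            have := P_ne h t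
            field_simp
          · simp
      rw [e1, e2]; ring
    rw [P_succ, mul_inv, ← mul_right_inj' hr, key]
    field_simp

/-- Durfee type identity. -/
lemma durfee {q : ℂ} (h : ‖q‖ < 1) (n : ℕ) :
    ∑' u : ℕ, q ^ (u*(u+n)) * ((qPoch q q u)⁻¹ * (qPoch q q (u+n))⁻¹) = (qPochInf q q)⁻¹ := by
  obtain ⟨C, hC1, hC⟩ := P_bound h
  have hC0 : 0 ≤ C := by linarith
  have hlim := (qPoch_tendsto q h).inv₀ (PInf_ne h)
  have T : Filter.Tendsto (fun N : ℕ => ∑' u : ℕ, (if u ≤ N then (qPoch q q (N-u))⁻¹ *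
      (q ^ (u*(u+n)) * ((qPoch q q u)⁻¹ * (qPoch q q (u+n))⁻¹)) else 0)) Filter.atTop
      (nhds (∑' u : ℕ, (qPochInf q q)⁻¹ * (q ^ (u*(u+n)) * ((qPoch q q u)⁻¹ * (qPoch q q (u+n))⁻¹)))) := by
    apply tendsto_tsum_of_dominated_convergence (bound := fun u => C * (‖q‖^u * (C * C)))
    · exact ((summable_geometric_of_lt_one (norm_nonneg _) h).mul_right _).mul_left _
    · intro u
      have h1 : Filter.Tendsto (fun N : ℕ => (qPoch q q (N-u))⁻¹ *
        (q ^ (u*(u+n)) * ((qPoch q q u)⁻¹ * (qPoch q q (u+n))⁻¹))) Filter.atTop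
        (nhds ((qPochInf q q)⁻¹ * (q ^ (u*(u+n)) * ((qPoch q q u)⁻¹ * (qPoch q q (u+n))⁻¹)))) :=
        (hlim.comp (Filter.tendsto_sub_atTop_nat u)).mul_const _
      refine h1.congr' ?_
      filter_upwards [Filter.eventually_ge_atTop u] with N hN
      simp [hN]
    · refine Filter.Eventually.of_forall fun N u => ?_
      split_ifs
      · rw [norm_mul, norm_mul, norm_mul, norm_pow]
        have hp : ‖q‖ ^ (u*(u+n)) ≤ ‖q‖ ^ u := by
          rcases Nat.eq_zero_or_pos u with h0 | h0
          · simp [h0]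
          · exact pow_le_pow_of_le_one (norm_nonneg _) h.le (by nlinarith)
        exact mul_le_mul (hC _) (mul_le_mul hp (mul_le_mul (hC _) (hC _) (norm_nonneg _) hC0)
          (by positivity) (by positivity)) (by positivity) hC0
      · simp; positivity
  have E : ∀ N : ℕ, ∑' u : ℕ, (if u ≤ N then (qPoch q q (N-u))⁻¹ *
      (q ^ (u*(u+n)) * ((qPoch q q u)⁻¹ * (qPoch q q (u+n))⁻¹)) else 0)
      = (qPoch q q N)⁻¹ * (qPoch q q (N+n))⁻¹ := by
    intro N
    rw [← V_id h N (N+n), ← Finset.sum_range_reflect, tsum_eq_sum (s := Finset.range (N+1))]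
    · apply Finset.sum_congr rfl
      intro u hu
      have hu' : u ≤ N := by simp at hu; omega
      obtain ⟨a, rfl⟩ := Nat.exists_eq_add_of_le hu'
      have e1 : u + a + 1 - 1 - u = a := by omega
      have e2 : u + a - a = u := by omega
      have e3 : u + a + n - a = u + n := by omega
      have e4 : u + a - u = a := by omega
      have e5 : a ≤ u + a + n := by omega
      simp only [e1, e2, e3, e4, e5, if_true, hu']
      ring
    · intro u hu
      simp at hu
      simp; omega
  have T2 : Filter.Tendsto (fun N : ℕ => (qPoch q q N)⁻¹ * (qPoch q q (N+n))⁻¹) Filter.atTop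
      (nhds ((qPochInf q q)⁻¹ * (qPochInf q q)⁻¹)) :=
    hlim.mul (hlim.comp (Filter.tendsto_add_atTop_nat n))
  simp only [E] at T
  have := tendsto_nhds_unique T T2
  rw [tsum_mul_left] at this
  exact mul_left_cancel₀ (inv_ne_zero (PInf_ne h)) this

lemma choose_succ_two (n : ℕ) : (n+1).choose 2 = n.choose 2 + n := by
  rw [Nat.choose_succ_succ' n 1]; simp; ring

lemma pow_choose_bound {x : ℝ} (h0 : 0 ≤ x) (h : x < 1) (z : ℝ) (hz : 0 ≤ z) :
    Summable (fun n : ℕ => x ^ (n.choose 2) * z ^ n) := by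
  by_cases hz0 : z = 0
  · subst hz0
    refine summable_of_ne_finset_zero (s := {0}) ?_
    intro n hn
    simp at hn
    simp [hn]
  by_cases hx0 : x = 0
  · subst hx0
    refine summable_of_ne_finset_zero (s := {0,1}) ?_
    intro n hn
    simp at hn
    have : n.choose 2 ≠ 0 := by
      rw [Nat.choose_ne_zero_iff]; omega
    simp [this]
  have hx : 0 < x := lt_of_le_of_ne h0 (Ne.symm hx0)
  have hzp : 0 < z := lt_of_le_of_ne hz (Ne.symm hz0)
  refine summable_of_ratio_test_tendsto_lt_one (l := 0) (by norm_num) ?_ ?_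
  · exact Filter.Eventually.of_forall fun n => by positivity
  · have : Filter.Tendsto (fun n : ℕ => x ^ n * z) Filter.atTop (nhds (0 * z)) :=
      (tendsto_pow_atTop_nhds_zero_of_lt_one h0 h).mul_const z
    rw [zero_mul] at this
    refine this.congr fun n => ?_
    rw [Real.norm_of_nonneg (by positivity), Real.norm_of_nonneg (by positivity),
      choose_succ_two]
    field_simp
    ring

lemma euler_summable {q : ℂ} (h : ‖q‖ < 1) (z : ℂ) :
    Summable (fun s : ℕ => ‖q ^ (s.choose 2) * z ^ s * (qPoch q q s)⁻¹‖) := by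
  obtain ⟨C, hC1, hC⟩ := P_bound h
  refine Summable.of_nonneg_of_le (fun _ => norm_nonneg _) ?_
    ((pow_choose_bound (norm_nonneg q) h ‖z‖ (norm_nonneg z)).mul_right C)
  intro s
  rw [norm_mul, norm_mul, norm_pow, norm_pow]
  gcongr
  exact hC s

lemma euler {q : ℂ} (h : ‖q‖ < 1) (z : ℂ) :
    ∑' s : ℕ, q ^ (s.choose 2) * z ^ s * (qPoch q q s)⁻¹ = qPochInf (-z) q := by
  set F : ℂ → ℂ := fun z => ∑' s : ℕ, q ^ (s.choose 2) * z ^ s * (qPoch q q s)⁻¹ with hF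
  have fe : ∀ z, F z = (1 + z) * F (z * q) := by
    intro z
    have s0 := (euler_summable h z).of_norm
    have s1 := (euler_summable h (z*q)).of_norm
    have a1 : F z - F (z*q) = z * F (z*q) := by
      simp only [hF]
      rw [← s0.tsum_sub s1, (s0.sub s1).tsum_eq_zero_add, ← tsum_mul_left]
      simp only [pow_zero, sub_self, zero_add]
      apply tsum_congr
      intro s
      rw [P_succ, choose_succ_two]
      have := one_sub_pow_ne h s
      have := P_ne h s
      field_simp
      ring
    linear_combination a1
  have it : ∀ N, F z = qPoch (-z) q N * F (z * q ^ N) := by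
    intro N
    induction N with
    | zero => simp [qPoch_zero]
    | succ N ih =>
      rw [ih, fe (z * q^N), qPoch_succ, pow_succ]
      ring_nf
  have lim : Filter.Tendsto (fun N : ℕ => F (z * q ^ N)) Filter.atTop (nhds (F 0)) := by
    apply tendsto_tsum_of_dominated_convergence (euler_summable h z)
    · intro s
      have h1 : Filter.Tendsto (fun N : ℕ => z * q ^ N) Filter.atTop (nhds (z * 0)) :=
        (tendsto_pow_atTop_nhds_zero_of_norm_lt_one h).const_mul z
      rw [mul_zero] at h1
      exact ((h1.pow s).const_mul _).mul_const _
    · refine Filter.Eventually.of_forall fun N s => ?_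
      simp only [norm_mul, norm_pow]
      gcongr
      exact mul_le_of_le_one_right (norm_nonneg _) (pow_le_one₀ (norm_nonneg _) h.le)
  have F0 : F 0 = 1 := by
    simp only [hF]
    rw [tsum_eq_single 0]
    · simp [qPoch_zero]
    · intro s hs; simp [hs]
  have t := (qPoch_tendsto (-z) h).mul lim
  rw [F0, mul_one] at t
  have t2 : Filter.Tendsto (fun N : ℕ => F z) Filter.atTop (nhds (qPochInf (-z) q)) :=
    t.congr fun N => (it N).symm
  exact tendsto_nhds_unique tendsto_const_nhds t2

lemma tsum_fiber {α β : Type*} {f : α → ℂ} (hf : Summable f) (g : α → β) (F : β → Finset α)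
    (hF : ∀ a b, a ∈ F b ↔ g a = b) :
    Summable (fun b => ∑ a ∈ F b, f a) ∧ ∑' a, f a = ∑' b, ∑ a ∈ F b, f a := by
  have hs : Summable (f ∘ (Equiv.sigmaFiberEquiv g)) := (Equiv.sigmaFiberEquiv g).summable_iff.mpr hf
  have e : ∀ b, ∑' a : {a // g a = b}, f a = ∑ a ∈ F b, f a := by
    intro b
    have : {a | g a = b} = (F b : Set α) := by
      ext a; simp [hF]
    rw [← Finset.tsum_subtype' (F b) f, ← this]
    rfl
  constructor
  · refine hs.sigma.congr fun b => ?_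
    rw [← e b]; rfl
  · rw [← (Equiv.sigmaFiberEquiv g).tsum_eq f]
    rw [Summable.tsum_sigma (f := fun c => f ((Equiv.sigmaFiberEquiv g) c)) hs]
    exact tsum_congr fun b => e b

open PowerSeries in
lemma ps_unique {q : ℂ} (h : ‖q‖ < 1) (R H : PowerSeries ℂ) (hR : coeff 0 R = 1)
    (hH : rescale q H = R * H) (h0 : coeff 0 H = 0) : H = 0 := by
  ext n
  simp only [map_zero]
  induction n using Nat.strong_induction_on with
  | _ n ih =>
    rcases n with _ | n
    · exact h0
    · have := congrArg (coeff (n+1)) hH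
      rw [coeff_rescale, coeff_mul, Finset.Nat.sum_antidiagonal_eq_sum_range_succ_mk,
        Finset.sum_range_succ', Finset.sum_eq_zero] at this
      · simp only [zero_add, Nat.sub_zero, hR, one_mul] at this
        have h2 : (1 - q^(n+1)) * coeff (n+1) H = 0 := by linear_combination -this
        exact (mul_eq_zero.mp h2).resolve_left (one_sub_pow_ne h n)
      · intro i hi
        rw [ih _ (by omega), mul_zero]

lemma norm_sq_lt {q : ℂ} (h : ‖q‖ < 1) : ‖q^2‖ < 1 := by
  rw [norm_pow]; exact pow_lt_one₀ (norm_nonneg _) h (by norm_num)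

noncomputable def dd (q : ℂ) (n : ℕ) : ℂ := if Even n then (qPoch (q^2) (q^2) (n/2))⁻¹ else 0

open PowerSeries in
lemma W_series {q : ℂ} (h : ‖q‖ < 1) :
    (mk (dd q)) * ((mk fun j => q ^ (j^2) * (qPoch (q^2) (q^2) j)⁻¹) *
      (mk fun l => q ^ (l^2 - l) * (qPoch (q^2) (q^2) l)⁻¹)) =
    mk fun s => (qPoch q q s)⁻¹ := by
  have hQ := norm_sq_lt h
  set D := mk (dd q)
  set E1 := (mk fun j => q ^ (j^2) * (qPoch (q^2) (q^2) j)⁻¹)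
  set E0 := (mk fun l => q ^ (l^2 - l) * (qPoch (q^2) (q^2) l)⁻¹)
  set G := (mk fun s => (qPoch q q s)⁻¹)
  have eG : rescale q G = (1 - X) * G := by
    ext n
    rw [sub_mul, one_mul, map_sub, coeff_rescale]
    rcases n with _ | n
    · simp [G]
    · rw [coeff_succ_X_mul]
      simp only [G, coeff_mk, P_succ]
      have := P_ne h n
      have := one_sub_pow_ne h n
      field_simp
      ring
  have eD : rescale q D = (1 - X * X) * D := by
    ext n
    rw [sub_mul, one_mul, map_sub, coeff_rescale, mul_assoc]
    rcases n with _ | _ | n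
    · simp [D]
    · simp [D, dd, coeff_succ_X_mul]
    · rw [coeff_succ_X_mul, coeff_succ_X_mul]
      simp only [D, coeff_mk, dd]
      have e : Even (n+1+1) ↔ Even n := by simp [Nat.even_add_one]
      by_cases hn : Even n
      · obtain ⟨m, rfl⟩ := hn
        have e1 : (m+m+1+1)/2 = m+1 := by omega
        have e2 : (m+m)/2 = m := by omega
        have e3 : q^(m+m+1+1) = (q^2)^(m+1) := by rw [← pow_mul]; congr 1; ring
        rw [if_pos (e.mpr ⟨m, rfl⟩), if_pos ⟨m, rfl⟩, e1, e2, e3, P_succ]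
        have := P_ne hQ m
        have := one_sub_pow_ne hQ m
        field_simp
        ring
      · rw [if_neg (fun x => hn (e.mp x)), if_neg hn]; simp
  have eE1 : E1 = (1 + C q * X) * rescale (q^2) E1 := by
    ext n
    rw [add_mul, one_mul, map_add, coeff_rescale, mul_assoc, coeff_C_mul]
    rcases n with _ | n
    · simp [E1]
    · rw [coeff_succ_X_mul, coeff_rescale]
      simp only [E1, coeff_mk, P_succ]
      have := P_ne hQ n
      have := one_sub_pow_ne hQ n
      field_simp
      ring
  have eE0 : E0 = (1 + X) * rescale (q^2) E0 := by
    ext n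
    rw [add_mul, one_mul, map_add, coeff_rescale]
    rcases n with _ | n
    · simp [E0]
    · rw [coeff_succ_X_mul, coeff_rescale]
      simp only [E0, coeff_mk, P_succ]
      have := P_ne hQ n
      have := one_sub_pow_ne hQ n
      have e1 : (n+1)^2 - (n+1) = (n^2 - n) + 2 * n := by
        have : n ≤ n^2 := by nlinarith
        have : (n+1)^2 = n^2 + 2*n+1 := by ring
        omega
      rw [e1]
      field_simp
      ring
  have rX : rescale q (X : PowerSeries ℂ) = C q * X := by
    rw [rescale_X]
  have eG2 : rescale (q^2) G = (1 - X) * (1 - C q * X) * G := by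
    have : rescale (q^2) G = rescale q (rescale q G) := by
      rw [rescale_rescale, pow_two]
    rw [this, eG, map_mul, eG, map_sub, map_one, rX]; ring
  have eD2 : rescale (q^2) D = (1 - X*X) * (1 - (C q * X) * (C q * X)) * D := by
    have : rescale (q^2) D = rescale q (rescale q D) := by
      rw [rescale_rescale, pow_two]
    rw [this, eD, map_mul, eD, map_sub, map_one, map_mul, rX]; ring
  have n1 : (1 + X : PowerSeries ℂ) ≠ 0 := by
    intro h; have := congrArg (coeff 0) h; simp at this
  have n2 : (1 + C q * X : PowerSeries ℂ) ≠ 0 := by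
    intro h; have := congrArg (coeff 0) h; simp at this
  have eP : rescale (q^2) (D * (E1 * E0)) = (1 - X) * (1 - C q * X) * (D * (E1 * E0)) := by
    apply mul_left_cancel₀ (mul_ne_zero n1 n2)
    rw [map_mul, map_mul, eD2]
    conv_rhs => rw [eE1, eE0]
    ring
  have := ps_unique hQ ((1 - X) * (1 - C q * X)) (D * (E1 * E0) - G) (by simp)
    (by rw [map_sub, eP, eG2]; ring)
    (by simp [D, E1, E0, G, dd, qPoch_zero])
  exact sub_eq_zero.mp this

lemma W_id {q : ℂ} (h : ‖q‖ < 1) (s : ℕ) :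
    ∑ n ∈ (Finset.HasAntidiagonal.antidiagonal s).filter (fun n => Even n.1), ∑ p ∈ Finset.HasAntidiagonal.antidiagonal n.2,
      (qPoch (q^2) (q^2) (n.1/2))⁻¹ * ((q ^ (p.1^2) * (qPoch (q^2) (q^2) p.1)⁻¹) *
      (q ^ (p.2^2 - p.2) * (qPoch (q^2) (q^2) p.2)⁻¹)) = (qPoch q q s)⁻¹ := by
  have := congrArg (PowerSeries.coeff s) (W_series h)
  rw [PowerSeries.coeff_mul, PowerSeries.coeff_mk] at this
  rw [← this, Finset.sum_filter]
  apply Finset.sum_congr rfl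
  intro n hn
  rw [PowerSeries.coeff_mul, Finset.mul_sum]
  split_ifs with he <;> simp [dd, he]

noncomputable def f5 (q : ℂ) (p : ℕ × ℕ × ℕ × ℕ × ℕ) : ℂ :=
  q ^ ((((p.1:ℤ) - p.2.2.2.1 - p.2.1 - p.2.2.2.2 - 2 * p.2.2.1)^2 + (p.1:ℤ)^2 - p.1 + (p.2.2.2.1:ℤ)^2
    + (p.2.1:ℤ)^2 + p.2.1 + (p.2.2.2.2:ℤ)^2 - p.2.2.2.2 : ℤ)) *
  ((qPoch (q^2) (q^2) p.1)⁻¹ * ((qPoch (q^2) (q^2) p.2.1)⁻¹ * ((qPoch (q^2) (q^2) p.2.2.1)⁻¹ *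
    ((qPoch (q^2) (q^2) p.2.2.2.1)⁻¹ * (qPoch (q^2) (q^2) p.2.2.2.2)⁻¹))))

noncomputable def f3 (q : ℂ) (p : ℕ × ℕ × ℕ) : ℂ :=
  q ^ ((((p.1:ℤ) - p.2.1 - p.2.2)^2 + (p.1:ℤ)^2 - p.1 + (p.2.1:ℤ)^2 + p.2.1 : ℤ)) *
  ((qPoch (q^2) (q^2) p.1)⁻¹ * ((qPoch (q^2) (q^2) p.2.1)⁻¹ * (qPoch q q p.2.2)⁻¹))

lemma f5_summable {q : ℂ} (h0 : 0 < ‖q‖) (h : ‖q‖ < 1) : Summable (f5 q) := by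
  obtain ⟨C, hC1, hC⟩ := P_bound (norm_sq_lt h)
  have hC0 : 0 ≤ C := by linarith
  have g := summable_geometric_of_lt_one (norm_nonneg q) h
  have n0 : ∀ n : ℕ, 0 ≤ ‖q‖ ^ n := fun n => by positivity
  have g2 := g.mul_of_nonneg g n0 n0
  have g3 := g.mul_of_nonneg g2 n0 (fun p => by positivity)
  have g4 := g.mul_of_nonneg g3 n0 (fun p => by positivity)
  have g5 := g.mul_of_nonneg g4 n0 (fun p => by positivity)
  refine Summable.of_norm_bounded
    ((g5.mul_left (‖q‖ ^ (-3:ℤ))).mul_right (C * (C * (C * (C * C))))) ?_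
  rintro ⟨i, k, t, j, l⟩
  simp only [f5]
  rw [norm_mul, norm_mul, norm_mul, norm_mul, norm_mul, norm_zpow]
  refine mul_le_mul ?_ ?_ (by positivity) (by positivity)
  · have : ‖q‖ ^ (-3:ℤ) * (‖q‖ ^ i * (‖q‖ ^ k * (‖q‖ ^ t * (‖q‖ ^ j * ‖q‖ ^ l)))) =
        ‖q‖ ^ ((-3:ℤ) + (i + (k + (t + (j + l))))) := by
      rw [zpow_add₀ h0.ne', zpow_add₀ h0.ne', zpow_add₀ h0.ne', zpow_add₀ h0.ne', zpow_add₀ h0.ne']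
      simp only [zpow_natCast]
    rw [this]
    apply zpow_le_zpow_right_of_le_one₀ h0 h.le
    set A : ℤ := (i:ℤ) - j - k - l - 2 * t with hA
    have a1 : 0 ≤ A^2 + A := by
      rcases le_or_gt 0 A with h | h
      · positivity
      · nlinarith
    have a2 : 0 ≤ (i:ℤ)^2 - 3 * i + 3 := by nlinarith [sq_nonneg (2 * (i:ℤ) - 3)]
    have := sq_nonneg (j:ℤ)
    have := sq_nonneg (k:ℤ)
    have a3 : (l:ℤ) ≤ (l:ℤ)^2 := by
      rcases Nat.eq_zero_or_pos l with h | h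
      · simp [h]
      · have : (1:ℤ) ≤ l := by exact_mod_cast h
        nlinarith
    have a4 : (k:ℤ) ≤ (k:ℤ)^2 := by
      rcases Nat.eq_zero_or_pos k with h | h
      · simp [h]
      · have : (1:ℤ) ≤ k := by exact_mod_cast h
        nlinarith
    have : (0:ℤ) ≤ t := by positivity
    have : (0:ℤ) ≤ k := by positivity
    nlinarith
  · have m1 := mul_le_mul (hC j) (hC l) (norm_nonneg _) hC0
    have m2 := mul_le_mul (hC t) m1 (by positivity) hC0
    have m3 := mul_le_mul (hC k) m2 (by positivity) hC0
    exact mul_le_mul (hC i) m3 (by positivity) hC0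

lemma V_step {q : ℂ} (h0 : 0 < ‖q‖) (h : ‖q‖ < 1) :
    (∑' p : ℕ × ℕ × ℕ × ℕ,
      (fun (i j k l : ℕ) =>
        q ^ ((2*(i:ℤ)^2 + 2*(j:ℤ)^2 + 2*(k:ℤ)^2 + 2*(l:ℤ)^2 - 2*(i:ℤ)*(j:ℤ) - 2*(i:ℤ)*(k:ℤ) - 2*(i:ℤ)*(l:ℤ) + 2*(j:ℤ)*(k:ℤ) + 2*(j:ℤ)*(l:ℤ) - (i:ℤ) + (k:ℤ) - (l:ℤ)) : ℤ) /
          (qPoch (q ^ 2) (q ^ 2) i * qPoch (q ^ 2) (q ^ 2) j * qPoch (q ^ 2) (q ^ 2) k * qPoch (q ^ 2) (q ^ 2) l))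
        p.1 p.2.1 p.2.2.1 p.2.2.2) = ∑' p, f5 q p := by
  have hq : q ≠ 0 := norm_pos_iff.mp h0
  rw [(tsum_fiber (f5_summable h0 h)
    (fun p => ((p.1, p.2.2.2.1, p.2.1 + p.2.2.1, p.2.2.2.2 + p.2.2.1) : ℕ × ℕ × ℕ × ℕ))
    (fun p => ((Finset.range (p.2.2.1+1)).filter (fun t => t ≤ p.2.2.2)).image
      (fun t => (p.1, p.2.2.1 - t, t, p.2.1, p.2.2.2 - t))) ?_).2]
  · apply tsum_congr
    rintro ⟨i, j, k, l⟩
    simp only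
    rw [Finset.sum_image]
    swap
    · intro a _ b _ hab
      simp only [Prod.mk.injEq] at hab
      exact hab.2.2.1
    have V := V_id (norm_sq_lt h) k l
    rw [← Finset.sum_filter] at V
    rw [div_eq_mul_inv, mul_inv, mul_inv, mul_inv, mul_assoc _ (qPoch (q ^ 2) (q ^ 2) k)⁻¹, ← V,
      Finset.mul_sum, Finset.mul_sum]
    apply Finset.sum_congr rfl
    intro t ht
    simp only [Finset.mem_filter, Finset.mem_range] at ht
    obtain ⟨ht1, htl⟩ := ht
    have htk : t ≤ k := by omega
    obtain ⟨a, rfl⟩ := Nat.exists_eq_add_of_le htk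
    obtain ⟨b, rfl⟩ := Nat.exists_eq_add_of_le htl
    simp only [f5, Nat.add_sub_cancel_left]
    have e : q ^ ((((i:ℤ) - j - a - b - 2 * t)^2 + (i:ℤ)^2 - i + (j:ℤ)^2
        + (a:ℤ)^2 + a + (b:ℤ)^2 - b : ℤ)) = q ^ ((2*(i:ℤ)^2 + 2*(j:ℤ)^2 + 2*((t+a:ℕ):ℤ)^2 + 2*((t+b:ℕ):ℤ)^2 - 2*(i:ℤ)*(j:ℤ) - 2*(i:ℤ)*((t+a:ℕ):ℤ) - 2*(i:ℤ)*((t+b:ℕ):ℤ) + 2*(j:ℤ)*((t+a:ℕ):ℤ) + 2*(j:ℤ)*((t+b:ℕ):ℤ) - (i:ℤ) + ((t+a:ℕ):ℤ) - ((t+b:ℕ):ℤ)) : ℤ) * (q^2) ^ (a * b) := by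
      rw [← pow_mul, ← zpow_natCast q (2 * (a*b)), ← zpow_add₀ hq]
      congr 1
      push_cast
      ring
    rw [e]
    ring
  · rintro ⟨i, κ, t, j, l⟩ ⟨i', j', k', l'⟩
    simp only [Finset.mem_image, Finset.mem_filter, Finset.mem_range, Prod.mk.injEq]
    constructor
    · rintro ⟨x, hx⟩; omega
    · intro hx; exact ⟨t, by omega⟩

lemma W_step {q : ℂ} (h0 : 0 < ‖q‖) (h : ‖q‖ < 1) :
    Summable (f3 q) ∧ ∑' p, f5 q p = ∑' p, f3 q p := by
  have hq : q ≠ 0 := norm_pos_iff.mp h0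
  have key := (tsum_fiber (f5_summable h0 h)
    (fun p => ((p.1, p.2.1, 2 * p.2.2.1 + (p.2.2.2.1 + p.2.2.2.2)) : ℕ × ℕ × ℕ))
    (fun p => (((Finset.HasAntidiagonal.antidiagonal p.2.2).filter (fun n => Even n.1)).sigma
      (fun n => Finset.HasAntidiagonal.antidiagonal n.2)).image
      (fun x => (p.1, p.2.1, x.1.1 / 2, x.2.1, x.2.2))) ?_)
  · have e : (fun b : ℕ × ℕ × ℕ => ∑ a ∈ (((Finset.HasAntidiagonal.antidiagonal b.2.2).filter (fun n => Even n.1)).sigma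
      (fun n => Finset.HasAntidiagonal.antidiagonal n.2)).image
      (fun x => (b.1, b.2.1, x.1.1 / 2, x.2.1, x.2.2)), f5 q a) = f3 q := by
      funext ⟨i, κ, s⟩
      simp only
      rw [Finset.sum_image]
      swap
      · rintro ⟨⟨a, b⟩, c, d⟩ hx ⟨⟨a', b'⟩, c', d'⟩ hx' hab
        simp only [Finset.coe_sigma, Set.mem_sigma_iff, Finset.mem_coe, Finset.mem_filter,
          Finset.HasAntidiagonal.mem_antidiagonal, Prod.mk.injEq] at hx hx' hab
        obtain ⟨⟨h1, ⟨m, h2⟩⟩, h3⟩ := hx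
        obtain ⟨⟨h1', ⟨m', h2'⟩⟩, h3'⟩ := hx'
        have : m = m' := by omega
        have : b = b' := by omega
        have : c = c' := by omega
        have : d = d' := by omega
        subst_vars
        rfl
      rw [Finset.sum_sigma]
      simp only [f3]
      rw [← W_id h s, Finset.mul_sum, Finset.mul_sum, Finset.mul_sum]
      apply Finset.sum_congr rfl
      rintro ⟨n, b⟩ hn
      rw [Finset.mul_sum, Finset.mul_sum, Finset.mul_sum]
      apply Finset.sum_congr rfl
      rintro ⟨j, l⟩ hjl
      simp only [Finset.mem_filter, Finset.HasAntidiagonal.mem_antidiagonal] at hn hjl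
      obtain ⟨hn1, ⟨t, rfl⟩⟩ := hn
      have e1 : (t + t) / 2 = t := by omega
      simp only [f5, e1]
      have hs : (s:ℤ) = 2 * t + (j + l) := by omega
      have hl : ((l^2 - l : ℕ):ℤ) = (l:ℤ)^2 - l := by
        rw [Nat.cast_sub (by nlinarith)]; push_cast; ring
      have e : q ^ ((((i:ℤ) - j - κ - l - 2 * t)^2 + (i:ℤ)^2 - i + (j:ℤ)^2
          + (κ:ℤ)^2 + κ + (l:ℤ)^2 - l : ℤ)) = q ^ ((((i:ℤ) - κ - s)^2 + (i:ℤ)^2 - i + (κ:ℤ)^2 + κ : ℤ)) *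
          (q ^ (j^2) * q ^ (l^2 - l)) := by
        rw [← zpow_natCast q (j^2), ← zpow_natCast q (l^2-l), ← zpow_add₀ hq, ← zpow_add₀ hq, hl, hs]
        congr 1
        push_cast
        ring
      rw [e]
      ring
    rw [e] at key
    exact key
  · rintro ⟨i, κ, t, j, l⟩ ⟨i', κ', s'⟩
    simp only [Finset.mem_image, Finset.mem_filter, Finset.mem_sigma, Finset.HasAntidiagonal.mem_antidiagonal, Prod.mk.injEq]
    constructor
    · rintro ⟨⟨⟨a, b⟩, c, d⟩, ⟨⟨h1, ⟨m, h2⟩⟩, h3⟩, h4⟩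
      simp only at *
      omega
    · rintro ⟨h1, h2, h3⟩
      exact ⟨⟨(t+t, j+l), (j, l)⟩, by refine ⟨⟨⟨by simp only; omega, ⟨t, rfl⟩⟩, rfl⟩, h1.symm, h2.symm, by simp only; omega, rfl, rfl⟩⟩

lemma phi_bij : Function.Bijective
    (fun x : ℤ × ℕ => ((x.2 + x.1.toNat, x.2 + (-x.1).toNat) : ℕ × ℕ)) := by
  constructor
  · rintro ⟨n, u⟩ ⟨n', u'⟩ h
    simp only [Prod.mk.injEq] at h ⊢
    omega
  · rintro ⟨i, r⟩
    refine ⟨((i:ℤ) - r, min i r), ?_⟩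
    simp only [Prod.mk.injEq]
    omega

lemma psi_bij : Function.Bijective
    (fun x : ℕ × ℤ × ℕ => ((x.2.2 + x.2.1.toNat, x.2.2 + (-x.2.1).toNat, x.1) : ℕ × ℕ × ℕ)) := by
  constructor
  · rintro ⟨s, n, u⟩ ⟨s', n', u'⟩ h
    simp only [Prod.mk.injEq] at h ⊢
    omega
  · rintro ⟨i, r, s⟩
    refine ⟨(s, (i:ℤ) - r, min i r), ?_⟩
    simp only [Prod.mk.injEq, and_true]
    omega

lemma inf_split {q : ℂ} (h : ‖q‖ < 1) (a : ℂ) :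
    qPochInf a (q^2) * qPochInf (a*q) (q^2) = qPochInf a q := by
  have m := mult_poch a (norm_sq_lt h)
  have m2 := mult_poch (a*q) (norm_sq_lt h)
  have e1 : (fun n : ℕ => 1 - a * (q^2)^n) = fun n => 1 - a * q^(2*n) := by
    funext n; rw [pow_mul]
  have e2 : (fun n : ℕ => 1 - a * q * (q^2)^n) = fun n => 1 - a * q^(2*n+1) := by
    funext n; rw [pow_succ q (2*n), pow_mul]; ring
  rw [e1] at m
  rw [e2] at m2
  have := tprod_even_mul_odd (f := fun n : ℕ => 1 - a * q^n) m m2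
  simp only [qPochInf]
  rw [e1, e2]
  exact this

lemma inf_sq {q : ℂ} (h : ‖q‖ < 1) (a : ℂ) :
    qPochInf a q * qPochInf (-a) q = qPochInf (a^2) (q^2) := by
  simp only [qPochInf]
  rw [← (mult_poch a h).tprod_mul (mult_poch (-a) h)]
  apply tprod_congr
  intro n
  ring

lemma inf_shift {q : ℂ} (h : ‖q‖ < 1) (a : ℂ) :
    qPochInf a q = (1 - a) * qPochInf (a*q) q := by
  have t1 := qPoch_tendsto a h
  have t2 := (qPoch_tendsto (a*q) h).const_mul (1-a)
  have t3 := t1.comp (Filter.tendsto_add_atTop_nat 1)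
  refine tendsto_nhds_unique t3 (t2.congr ?_)
  intro n
  simp only [Function.comp, qPoch]
  rw [Finset.prod_range_succ']
  simp only [pow_zero, mul_one]
  rw [mul_comm]
  congr 1
  apply Finset.prod_congr rfl
  intro k _
  ring

lemma choose_int (n : ℕ) : 2 * ((n.choose 2 : ℕ) : ℤ) = (n:ℤ)^2 - n := by
  induction n with
  | zero => simp
  | succ n ih => rw [choose_succ_two]; push_cast; linarith

lemma theta_prod {q : ℂ} (h0 : 0 < ‖q‖) (h : ‖q‖ < 1) :
    ∑' n : ℤ, q ^ (2*n^2 - n) = (J q 2)^2 / J q 1 := by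
  have hq : q ≠ 0 := norm_pos_iff.mp h0
  have hQ := norm_sq_lt h
  have h4 : ‖q^4‖ < 1 := by
    rw [norm_pow]; exact pow_lt_one₀ (norm_nonneg _) h (by norm_num)
  have A : qPochInf (-q) (q^4) * qPochInf (-(q^3)) (q^4)
      = (∑' n : ℤ, q ^ (2*n^2 - n)) * (qPochInf (q^4) (q^4))⁻¹ := by
    have s1 := euler_summable h4 q
    have s2 := euler_summable h4 (q^3)
    rw [← euler h4, ← euler h4, tsum_mul_tsum_of_summable_norm s1 s2]
    have s3 := (summable_mul_of_summable_norm s1 s2)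
    have e : ∀ x : ℤ × ℕ, ((q ^ 4) ^ (x.2 + x.1.toNat).choose 2 * q ^ (x.2 + x.1.toNat) * (qPoch (q ^ 4) (q ^ 4) (x.2 + x.1.toNat))⁻¹ *
        ((q ^ 4) ^ (x.2 + (-x.1).toNat).choose 2 * (q ^ 3) ^ (x.2 + (-x.1).toNat) * (qPoch (q ^ 4) (q ^ 4) (x.2 + (-x.1).toNat))⁻¹))
        = q ^ (2*x.1^2 - x.1) * ((q^4) ^ (x.2 * (x.2 + x.1.natAbs)) * ((qPoch (q^4) (q^4) x.2)⁻¹ * (qPoch (q^4) (q^4) (x.2 + x.1.natAbs))⁻¹)) := by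
      rintro ⟨n, u⟩
      have ee : ∀ a b : ℕ, (q ^ 4) ^ a.choose 2 * q ^ a * ((q ^ 4) ^ b.choose 2 * (q ^ 3) ^ b)
          = q ^ (2 * (a:ℤ)^2 - a + 2 * (b:ℤ)^2 + b) := by
        intro a b
        rw [← pow_mul, ← pow_mul, ← pow_mul, ← pow_add, ← pow_add, ← pow_add, ← zpow_natCast]
        congr 1
        push_cast
        linarith [choose_int a, choose_int b]
      have e3 : ∀ a : ℕ, (q^4)^a = q ^ (4 * (a:ℤ)) := by
        intro a
        rw [← pow_mul, ← zpow_natCast]; push_cast; rfl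
      have e4 := ee (u + n.toNat) (u + (-n).toNat)
      have e5 : q ^ (2 * ((u + n.toNat : ℕ):ℤ)^2 - ((u + n.toNat : ℕ):ℤ) + 2 * ((u + (-n).toNat : ℕ):ℤ)^2 + ((u + (-n).toNat : ℕ):ℤ))
          = q ^ (2*n^2 - n) * (q^4) ^ (u * (u + n.natAbs)) := by
        rw [e3, ← zpow_add₀ hq]
        congr 1
        obtain ⟨m, rfl | rfl⟩ := Int.eq_nat_or_neg n
        · simp; ring
        · simp; ring
      have e6 : (qPoch (q ^ 4) (q ^ 4) (u + n.toNat))⁻¹ * (qPoch (q ^ 4) (q ^ 4) (u + (-n).toNat))⁻¹ =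
          (qPoch (q^4) (q^4) u)⁻¹ * (qPoch (q^4) (q^4) (u + n.natAbs))⁻¹ := by
        obtain ⟨m, rfl | rfl⟩ := Int.eq_nat_or_neg n
        · simp; ring
        · simp
      rw [e5] at e4
      simp only
      rw [← e6, ← mul_assoc (q ^ (2*n^2 - n)), ← e4]
      ring
    rw [← (Equiv.ofBijective _ phi_bij).tsum_eq, ← tsum_mul_right]
    have s4 := (Equiv.ofBijective _ phi_bij).summable_iff.mpr s3
    simp only [Function.comp_def, Equiv.ofBijective_apply, e] at s4 ⊢
    rw [s4.tsum_prod]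
    apply tsum_congr
    intro n
    simp only [tsum_mul_left, durfee h4]
  have e4 : (q^2)^2 = q^4 := by ring
  have B := inf_split hQ (-q)
  rw [e4, show -q * q^2 = -(q^3) by ring] at B
  have B2 := inf_sq hQ (q^2)
  rw [e4] at B2
  have B3 := inf_split h (-q)
  have B4 := inf_sq h q
  rw [show -q * q = -(q^2) by ring] at B3
  have n4 := PInf_ne h4
  have n2 := PInf_ne hQ
  have n1 := PInf_ne h
  simp only [J, pow_one]
  rw [eq_div_iff n1]
  have C : (∑' n : ℤ, q ^ (2*n^2 - n)) = qPochInf (-q) (q^2) * qPochInf (q^4) (q^4) := by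
    rw [← B, A]; field_simp
  rw [C, ← B2]
  calc _ = qPochInf (q^2) (q^2) * (qPochInf q q * (qPochInf (-q) (q^2) * qPochInf (-(q^2)) (q^2))) := by ring
    _ = _ := by rw [B3, B4]; ring

lemma theta_shift (q : ℂ) (hq : q ≠ 0) (s : ℕ) :
    ∑' n : ℤ, q ^ ((n - s)^2 + n^2 - n) = q ^ (s.choose 2) * ∑' n : ℤ, q ^ (2*n^2 - n) := by
  rw [← tsum_mul_left]
  rcases Nat.even_or_odd' s with ⟨u, hu | hu⟩
  · rw [← (Equiv.addLeft (u:ℤ)).tsum_eq]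
    apply tsum_congr
    intro v
    rw [← zpow_natCast q (s.choose 2), ← zpow_add₀ hq]
    congr 1
    have := choose_int s
    have hs : (s:ℤ) = 2 * u := by rw [hu]; push_cast; ring
    simp only [Equiv.coe_addLeft]
    rw [hs] at this ⊢
    linarith
  · rw [← (Equiv.subLeft ((u:ℤ)+1)).tsum_eq]
    apply tsum_congr
    intro v
    rw [← zpow_natCast q (s.choose 2), ← zpow_add₀ hq]
    congr 1
    have := choose_int s
    have hs : (s:ℤ) = 2 * u + 1 := by rw [hu]; push_cast; ring
    simp only [Equiv.subLeft_apply]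
    rw [hs] at this ⊢
    linarith

lemma f3_sum {q : ℂ} (h0 : 0 < ‖q‖) (h : ‖q‖ < 1) :
    ∑' p, f3 q p = 2 * (J q 2)^2 / (J q 1)^2 := by
  have hq : q ≠ 0 := norm_pos_iff.mp h0
  have hQ := norm_sq_lt h
  have s3 := (W_step h0 h).1
  have e : ∀ x : ℕ × ℤ × ℕ, f3 q (x.2.2 + x.2.1.toNat, x.2.2 + (-x.2.1).toNat, x.1)
      = (qPoch q q x.1)⁻¹ * (q ^ ((x.2.1 - x.1)^2 + x.2.1^2 - x.2.1) * ((q^2) ^ (x.2.2 * (x.2.2 + x.2.1.natAbs)) * ((qPoch (q^2) (q^2) x.2.2)⁻¹ * (qPoch (q^2) (q^2) (x.2.2 + x.2.1.natAbs))⁻¹))) := by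
    rintro ⟨s, n, u⟩
    simp only [f3]
    have e3 : ∀ a : ℕ, (q^2)^a = q ^ (2 * (a:ℤ)) := by
      intro a
      rw [← pow_mul, ← zpow_natCast]; push_cast; rfl
    have e5 : q ^ ((((u + n.toNat : ℕ):ℤ) - ((u + (-n).toNat : ℕ):ℤ) - s)^2 + ((u + n.toNat : ℕ):ℤ)^2 - ((u + n.toNat : ℕ):ℤ) + ((u + (-n).toNat : ℕ):ℤ)^2 + ((u + (-n).toNat : ℕ):ℤ))
        = q ^ ((n - s)^2 + n^2 - n) * (q^2) ^ (u * (u + n.natAbs)) := by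
      rw [e3, ← zpow_add₀ hq]
      congr 1
      obtain ⟨m, rfl | rfl⟩ := Int.eq_nat_or_neg n
      · simp; ring
      · simp; ring
    have e6 : (qPoch (q ^ 2) (q ^ 2) (u + n.toNat))⁻¹ * (qPoch (q ^ 2) (q ^ 2) (u + (-n).toNat))⁻¹ =
        (qPoch (q^2) (q^2) u)⁻¹ * (qPoch (q^2) (q^2) (u + n.natAbs))⁻¹ := by
      obtain ⟨m, rfl | rfl⟩ := Int.eq_nat_or_neg n
      · simp; ring
      · simp
    rw [← e6, e5]
    ring
  rw [← (Equiv.ofBijective _ psi_bij).tsum_eq]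
  have s4 := (Equiv.ofBijective _ psi_bij).summable_iff.mpr s3
  simp only [Function.comp_def, Equiv.ofBijective_apply, e] at s4 ⊢
  rw [s4.tsum_prod]
  have e7 : ∀ s : ℕ, ∑' x : ℤ × ℕ, (qPoch q q s)⁻¹ * (q ^ ((x.1 - s)^2 + x.1^2 - x.1) * ((q^2) ^ (x.2 * (x.2 + x.1.natAbs)) * ((qPoch (q^2) (q^2) x.2)⁻¹ * (qPoch (q^2) (q^2) (x.2 + x.1.natAbs))⁻¹)))
      = q ^ (s.choose 2) * 1 ^ s * (qPoch q q s)⁻¹ * ((∑' n : ℤ, q ^ (2*n^2 - n)) * (qPochInf (q^2) (q^2))⁻¹) := by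
    intro s
    rw [(s4.prod_factor s).tsum_prod]
    simp only [tsum_mul_left, durfee hQ, tsum_mul_right, theta_shift q hq]
    ring
  simp only [e7]
  rw [tsum_mul_right, euler h, inf_shift h, theta_prod h0 h]
  have B4 := inf_sq h q
  have n2 := PInf_ne hQ
  have n1 := PInf_ne h
  simp only [J, pow_one]
  rw [← B4] at n2 ⊢
  have n3 := right_ne_zero_of_mul n2
  rw [show (-1 : ℂ) * q = -q by ring]
  field_simp
  ring

theorem stmt_6 (q : ℂ) (h0 : 0 < ‖q‖) (h1 : ‖q‖ < 1) :
    (∑' p : ℕ × ℕ × ℕ × ℕ,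
      (fun (i j k l : ℕ) =>
        q ^ ((2*(i:ℤ)^2 + 2*(j:ℤ)^2 + 2*(k:ℤ)^2 + 2*(l:ℤ)^2 - 2*(i:ℤ)*(j:ℤ) - 2*(i:ℤ)*(k:ℤ) - 2*(i:ℤ)*(l:ℤ) + 2*(j:ℤ)*(k:ℤ) + 2*(j:ℤ)*(l:ℤ) - (i:ℤ) + (k:ℤ) - (l:ℤ)) : ℤ) /
          (qPoch (q ^ 2) (q ^ 2) i * qPoch (q ^ 2) (q ^ 2) j * qPoch (q ^ 2) (q ^ 2) k * qPoch (q ^ 2) (q ^ 2) l))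
        p.1 p.2.1 p.2.2.1 p.2.2.2)
    = 2 * (J q 2)^2 / (J q 1)^2 := by
  exact (V_step h0 h1).trans ((W_step h0 h1).2.trans (f3_sum h0 h1))
end

section
/- For every complex number q with 0 < |q| < 1, one has ∑_{i,j,k,l ≥ 0} q^{2i²+2j²+2k²+2l²−2ij−2ik−2il+2jk+2jl−j} / ((q²;q²)_i (q²;q²)_j (q²;q²)_k (q²;q²)_l) = J_4⁵ J_{1,8} J_{6,16} / (J_1 J_2³ J_8² J_16) + 2q · J_8² J_{3,8} J_{2,16} / (J_1 J_2 J_4 J_16). -/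
open scoped BigOperators

open Filter Topology

lemma qp_norm_summable (a q : ℂ) (hq : ‖q‖ < 1) : Summable fun n : ℕ => ‖-(a * q ^ n)‖ := by
  simp only [norm_neg, norm_mul, norm_pow]
  exact (summable_geometric_of_lt_one (norm_nonneg _) hq).mul_left _

lemma qp_mult (a q : ℂ) (hq : ‖q‖ < 1) : Multipliable fun n : ℕ => (1 - a * q ^ n) := by
  have := multipliable_one_add_of_summable (qp_norm_summable a q hq)
  simpa [sub_eq_add_neg] using this

lemma qp_factor_ne (a q : ℂ) (ha : ‖a‖ < 1) (hq : ‖q‖ < 1) (n : ℕ) : 1 - a * q ^ n ≠ 0 := by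
  intro h
  have h1 : a * q ^ n = 1 := (sub_eq_zero.mp h).symm
  have h2 : ‖a * q ^ n‖ < 1 := by
    rw [norm_mul, norm_pow]
    calc ‖a‖ * ‖q‖ ^ n ≤ ‖a‖ * 1 := by
          gcongr
          exact pow_le_one₀ (norm_nonneg _) hq.le
      _ < 1 := by linarith
  rw [h1] at h2
  simp at h2

lemma qpi_ne (a q : ℂ) (ha : ‖a‖ < 1) (hq : ‖q‖ < 1) : qPochInf a q ≠ 0 := by
  have := tprod_one_add_ne_zero_of_summable (f := fun n : ℕ => -(a * q ^ n))
    (fun n => by simpa [sub_eq_add_neg] using qp_factor_ne a q ha hq n) (qp_norm_summable a q hq)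
  simpa [qPochInf, sub_eq_add_neg] using this

lemma qp_ne (q : ℂ) (hq : ‖q‖ < 1) (n : ℕ) : qPoch q q n ≠ 0 :=
  Finset.prod_ne_zero_iff.mpr fun k _ => qp_factor_ne q q hq hq k

lemma qp_tendsto (a q : ℂ) (hq : ‖q‖ < 1) :
    Tendsto (qPoch a q) atTop (𝓝 (qPochInf a q)) :=
  (qp_mult a q hq).hasProd.tendsto_prod_nat

noncomputable def uu (Q : ℂ) (n : ℤ) : ℂ := if 0 ≤ n then (qPoch Q Q n.toNat)⁻¹ else 0

lemma uu_neg (Q : ℂ) {n : ℤ} (h : n < 0) : uu Q n = 0 := by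
  simp [uu, not_le.mpr h]

lemma uu_nat (Q : ℂ) (n : ℕ) : uu Q n = (qPoch Q Q n)⁻¹ := by simp [uu]

lemma uu_zero (Q : ℂ) : uu Q 0 = 1 := by simp [uu, qPoch]

lemma uu_rec (Q : ℂ) (hQ : ‖Q‖ < 1) (n : ℤ) : (1 - Q ^ n) * uu Q n = uu Q (n - 1) := by
  rcases lt_trichotomy n 0 with h | h | h
  · rw [uu_neg _ h, uu_neg _ (by omega)]; simp
  · subst h; rw [uu_neg Q (n := 0 - 1) (by omega)]; simp
  · obtain ⟨m, rfl⟩ : ∃ m : ℕ, n = m + 1 := ⟨(n - 1).toNat, by omega⟩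
    have e : ((m : ℤ) + 1) = ((m + 1 : ℕ) : ℤ) := by push_cast; rfl
    rw [add_sub_cancel_right, e, uu_nat, uu_nat, zpow_natCast]
    have := qp_ne Q hQ (m + 1)
    have h2 : qPoch Q Q (m + 1) = qPoch Q Q m * (1 - Q ^ (m + 1)) := by
      rw [qPoch, Finset.prod_range_succ, pow_succ' Q m]; rfl
    rw [h2] at this ⊢
    have h3 := left_ne_zero_of_mul this
    have h4 := right_ne_zero_of_mul this
    field_simp

lemma uu_tendsto (Q : ℂ) (hQ : ‖Q‖ < 1) (a : ℤ) :
    Tendsto (fun k : ℕ => uu Q (k + a)) atTop (𝓝 (qPochInf Q Q)⁻¹) := by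
  have h1 : Tendsto (fun k : ℕ => (qPoch Q Q k)⁻¹) atTop (𝓝 (qPochInf Q Q)⁻¹) :=
    (qp_tendsto Q Q hQ).inv₀ (qpi_ne Q Q hQ hQ)
  have h2 : Tendsto (fun k : ℕ => ((k : ℤ) + a).toNat) atTop atTop := by
    refine tendsto_atTop.mpr fun b => ?_
    filter_upwards [eventually_ge_atTop (b + a.natAbs)] with k hk
    omega
  refine (h1.comp h2).congr' ?_
  filter_upwards [eventually_ge_atTop a.natAbs] with k hk
  simp only [Function.comp, uu]
  rw [if_pos (by omega)]

lemma uu_bdd (Q : ℂ) (hQ : ‖Q‖ < 1) : ∃ K : ℝ, 0 ≤ K ∧ ∀ n, ‖uu Q n‖ ≤ K := by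
  have h := (uu_tendsto Q hQ 0).norm.bddAbove_range
  obtain ⟨K, hK⟩ := h
  have h0 : ∀ n : ℕ, ‖uu Q n‖ ≤ K := fun n => hK ⟨n, by simp⟩
  refine ⟨K, (norm_nonneg _).trans (h0 0), fun n => ?_⟩
  rcases lt_or_ge n 0 with h | h
  · rw [uu_neg _ h, norm_zero]; exact (norm_nonneg _).trans (h0 0)
  · obtain ⟨m, rfl⟩ := Int.eq_ofNat_of_zero_le h
    exact h0 m

lemma sum_th_nat (r z : ℝ) (hr0 : 0 < r) (hr1 : r < 1) (hz : 0 < z) :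
    Summable fun n : ℕ => r ^ ((n : ℤ) ^ 2) * z ^ (n : ℤ) := by
  refine summable_of_ratio_test_tendsto_lt_one (l := 0) one_pos ?_ ?_
  · exact Eventually.of_forall fun n => by positivity
  · have : Tendsto (fun n : ℕ => (r ^ 2) ^ n * (r * z)) atTop (𝓝 (0 * (r * z))) :=
      (tendsto_pow_atTop_nhds_zero_of_lt_one (by positivity) (by nlinarith)).mul_const _
    rw [zero_mul] at this
    refine this.congr fun n => ?_
    rw [Real.norm_of_nonneg (by positivity), Real.norm_of_nonneg (by positivity)]
    rw [eq_div_iff (by positivity), ← pow_mul]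
    have e1 : r ^ (((n + 1 : ℕ) : ℤ) ^ 2) = r ^ ((n : ℤ) ^ 2) * r ^ (2 * n) * r := by
      rw [← zpow_natCast r (2 * n), ← zpow_add₀ hr0.ne', ← zpow_add_one₀ hr0.ne']
      congr 1; push_cast; ring
    have e2 : z ^ (((n + 1 : ℕ) : ℤ)) = z ^ (n : ℤ) * z := by
      rw [← zpow_add_one₀ hz.ne']; push_cast; rfl
    rw [e1, e2]; ring

lemma sum_th (r z : ℝ) (hr0 : 0 < r) (hr1 : r < 1) (hz : 0 < z) :
    Summable fun n : ℤ => r ^ (n ^ 2) * z ^ n := by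
  refine Summable.of_nat_of_neg (sum_th_nat r z hr0 hr1 hz) ?_
  refine (sum_th_nat r z⁻¹ hr0 hr1 (by positivity)).congr fun n => ?_
  simp

lemma sum_quad (r : ℝ) (hr0 : 0 < r) (hr1 : r < 1) (b c : ℤ) :
    Summable fun n : ℤ => r ^ (n ^ 2 + b * n + c) := by
  refine ((sum_th r (r ^ b) hr0 hr1 (by positivity)).mul_right (r ^ c)).congr fun n => ?_
  rw [zpow_add₀ hr0.ne', zpow_add₀ hr0.ne', zpow_mul]

/-- Zagier's / q-Vandermonde identity. -/
lemma zag_summable (Q : ℂ) (h0 : 0 < ‖Q‖) (hQ : ‖Q‖ < 1) (k l k1 l1 c1: ℤ) (e : ℤ → ℤ) (b c : ℤ)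
    (he : ∀ n, e n = n ^ 2 + b * n + c) :
    Summable fun n : ℤ => Q ^ (e n) * uu Q (k - k1 * n) * uu Q (l - l1 * n) * uu Q (n - c1) := by
  obtain ⟨K, hK0, hK⟩ := uu_bdd Q hQ
  refine Summable.of_norm_bounded ((sum_quad ‖Q‖ h0 hQ b c).mul_right (K * K * K)) fun n => ?_
  rw [norm_mul, norm_mul, norm_mul, norm_zpow, he, mul_assoc, mul_assoc, mul_assoc]
  gcongr <;> apply hK

noncomputable def VV (Q : ℂ) (k l : ℤ) : ℂ :=
  ∑' c : ℤ, Q ^ ((k - c) * (l - c)) * uu Q (k - c) * uu Q (l - c) * uu Q c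

lemma VV_rec (Q : ℂ) (h0 : 0 < ‖Q‖) (hQ : ‖Q‖ < 1) (k l : ℤ) :
    (1 - Q ^ k) * VV Q k l = VV Q (k - 1) l := by
  have hQ0 : Q ≠ 0 := norm_pos_iff.mp h0
  have hs1 : Summable fun c : ℤ =>
      Q ^ ((k - c) * (l - c)) * uu Q (k - 1 - c) * uu Q (l - c) * uu Q c := by
    simpa using zag_summable Q h0 hQ (k - 1) l 1 1 0 (fun c => (k - c) * (l - c)) (-(k + l)) (k * l)
      (fun n => by ring)
  have hs2 : Summable fun c : ℤ =>
      Q ^ ((k - c) * (l - c + 1)) * uu Q (k - c) * uu Q (l - c) * uu Q (c - 1) := by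
    simpa using zag_summable Q h0 hQ k l 1 1 1 (fun c => (k - c) * (l - c + 1)) (-(k + l + 1))
      (k * (l + 1)) (fun n => by ring)
  rw [VV, ← tsum_mul_left]
  have e1 : ∀ c : ℤ, (1 - Q ^ k) *
      (Q ^ ((k - c) * (l - c)) * uu Q (k - c) * uu Q (l - c) * uu Q c) =
      Q ^ ((k - c) * (l - c)) * uu Q (k - 1 - c) * uu Q (l - c) * uu Q c +
      Q ^ ((k - c) * (l - c + 1)) * uu Q (k - c) * uu Q (l - c) * uu Q (c - 1) := by
    intro c
    have a1 := uu_rec Q hQ (k - c)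
    rw [show k - c - 1 = k - 1 - c by ring] at a1
    have a2 := uu_rec Q hQ c
    rw [← a1, ← a2]
    have a3 : Q ^ k = Q ^ (k - c) * Q ^ c := by rw [← zpow_add₀ hQ0]; congr 1; ring
    have a4 : Q ^ ((k - c) * (l - c + 1)) = Q ^ ((k - c) * (l - c)) * Q ^ (k - c) := by
      rw [← zpow_add₀ hQ0]; congr 1; ring
    rw [a3, a4]; ring
  simp_rw [e1]
  have hs3 : Summable fun c : ℤ => Q ^ ((k - (c + 1)) * (l - (c + 1) + 1)) * uu Q (k - (c + 1)) *
      uu Q (l - (c + 1)) * uu Q ((c + 1) - 1) := by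
    have := (Equiv.addRight (1 : ℤ)).summable_iff.mpr hs2
    simpa only [Function.comp_def, Equiv.coe_addRight] using this
  rw [hs1.tsum_add hs2, ← (Equiv.addRight (1 : ℤ)).tsum_eq (fun c : ℤ =>
      Q ^ ((k - c) * (l - c + 1)) * uu Q (k - c) * uu Q (l - c) * uu Q (c - 1))]
  simp only [Equiv.coe_addRight]
  rw [← hs1.tsum_add hs3, VV]
  refine tsum_congr fun c => ?_
  have a1 := uu_rec Q hQ (l - c)
  rw [show l - (c + 1) = l - c - 1 by ring, ← a1, show k - (c + 1) = k - 1 - c by ring,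
    show c + 1 - 1 = c by ring, show l - c - 1 + 1 = l - c by ring,
    show (k - c) * (l - c) = (k - 1 - c) * (l - c) + (l - c) by ring, zpow_add₀ hQ0]
  ring

lemma VV_eq (Q : ℂ) (h0 : 0 < ‖Q‖) (hQ : ‖Q‖ < 1) (k l : ℤ) :
    VV Q k l = uu Q k * uu Q l := by
  rcases lt_or_ge k 0 with h | h
  · rw [uu_neg _ h, zero_mul, VV]
    convert tsum_zero with c
    rcases lt_or_ge c 0 with h' | h'
    · rw [uu_neg _ h', mul_zero]
    · rw [uu_neg Q (n := k - c) (by omega)]; simp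
  · obtain ⟨m, rfl⟩ := Int.eq_ofNat_of_zero_le h
    clear h
    induction m with
    | zero =>
      rw [VV, tsum_eq_single 0]
      · simp [uu_zero]
      · intro c hc
        rcases lt_or_ge c 0 with h' | h'
        · rw [uu_neg _ h', mul_zero]
        · rw [uu_neg Q (n := ((0 : ℕ) : ℤ) - c) (by omega)]; simp
    | succ m ih =>
      have a := VV_rec Q h0 hQ ((m + 1 : ℕ) : ℤ) l
      have b := uu_rec Q hQ ((m + 1 : ℕ) : ℤ)
      rw [show ((m + 1 : ℕ) : ℤ) - 1 = m by push_cast; ring] at a b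
      rw [ih, ← b] at a
      have hne : (1 - Q ^ ((m + 1 : ℕ) : ℤ)) ≠ 0 := by
        rw [zpow_natCast, pow_succ']; exact qp_factor_ne Q Q hQ hQ m
      apply mul_left_cancel₀ hne
      rw [a]; ring

lemma durfee_s7 (Q : ℂ) (h0 : 0 < ‖Q‖) (hQ : ‖Q‖ < 1) (m : ℤ) :
    ∑' a : ℤ, Q ^ (a * (a + m)) * uu Q a * uu Q (a + m) = (qPochInf Q Q)⁻¹ := by
  obtain ⟨K, hK0, hK⟩ := uu_bdd Q hQ
  have key : ∀ k : ℕ, uu Q (k : ℤ) * uu Q (k + m) =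
      ∑' a : ℤ, Q ^ (a * (a + m)) * uu Q a * uu Q (a + m) * uu Q (k + (-a)) := by
    intro k
    rw [← VV_eq Q h0 hQ, VV, ← (Equiv.subLeft (k : ℤ)).tsum_eq]
    refine tsum_congr fun a => ?_
    simp only [Equiv.subLeft_apply]
    rw [show (k : ℤ) - (k - a) = a by ring, show (k : ℤ) + m - (k - a) = a + m by ring]
    rfl
  have t1 : Tendsto (fun k : ℕ => uu Q (k : ℤ) * uu Q (k + m)) atTop
      (𝓝 ((qPochInf Q Q)⁻¹ * (qPochInf Q Q)⁻¹)) := by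
    have := uu_tendsto Q hQ 0
    simp only [add_zero] at this
    exact this.mul (uu_tendsto Q hQ m)
  have t2 := tendsto_tsum_of_dominated_convergence (𝓕 := atTop)
    (f := fun (k : ℕ) (a : ℤ) => Q ^ (a * (a + m)) * uu Q a * uu Q (a + m) * uu Q (k + (-a)))
    (g := fun a => Q ^ (a * (a + m)) * uu Q a * uu Q (a + m) * (qPochInf Q Q)⁻¹)
    ((sum_quad ‖Q‖ h0 hQ m 0).mul_right (K * K * K))
    (fun a => (uu_tendsto Q hQ (-a)).const_mul _)
    (Eventually.of_forall fun k a => by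
      rw [norm_mul, norm_mul, norm_mul, norm_zpow, mul_assoc, mul_assoc, mul_assoc,
        show a * (a + m) = a ^ 2 + m * a + 0 by ring]
      gcongr <;> apply hK)
  rw [tsum_mul_right] at t2
  have := tendsto_nhds_unique t1 (t2.congr fun k => (key k).symm)
  exact (mul_right_cancel₀ (inv_ne_zero (qpi_ne Q Q hQ hQ)) this).symm
lemma sq_norm (q : ℂ) (h0 : 0 < ‖q‖) (h1 : ‖q‖ < 1) : 0 < ‖q ^ 2‖ ∧ ‖q ^ 2‖ < 1 := by
  rw [norm_pow]; exact ⟨by positivity, by nlinarith⟩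

lemma sq_zpow (q : ℂ) (n : ℤ) : (q ^ 2) ^ n = q ^ (2 * n) := by
  rw [zpow_mul]; norm_cast

noncomputable def AA (q x : ℂ) : ℂ := ∑' s : ℤ, q ^ (s ^ 2 - s) * x ^ s * uu (q ^ 2) s

lemma AA_bound (q x : ℂ) (h0 : 0 < ‖q‖) (h1 : ‖q‖ < 1) (hx : x ≠ 0) (K : ℝ) :
    Summable fun s : ℤ => ‖q‖ ^ (s ^ 2 - s) * ‖x‖ ^ s * K := by
  have hx' : 0 < ‖x‖ := norm_pos_iff.mpr hx
  refine ((sum_th ‖q‖ (‖q‖⁻¹ * ‖x‖) h0 h1 (by positivity)).mul_right K).congr fun s => ?_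
  rw [zpow_sub₀ h0.ne', mul_zpow, inv_zpow]; ring

lemma AA_summable (q x : ℂ) (h0 : 0 < ‖q‖) (h1 : ‖q‖ < 1) (hx : x ≠ 0) (b : ℤ) :
    Summable fun s : ℤ => q ^ (s ^ 2 - s) * x ^ s * uu (q ^ 2) (s + b) := by
  obtain ⟨K, hK0, hK⟩ := uu_bdd (q ^ 2) (sq_norm q h0 h1).2
  refine Summable.of_norm_bounded (AA_bound q x h0 h1 hx K) fun s => ?_
  rw [norm_mul, norm_mul, norm_zpow, norm_zpow]
  gcongr; apply hK

lemma AA_rec (q x : ℂ) (h0 : 0 < ‖q‖) (h1 : ‖q‖ < 1) (hx : x ≠ 0) :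
    AA q x = (1 + x) * AA q (x * q ^ 2) := by
  have hq0 : q ≠ 0 := norm_pos_iff.mp h0
  obtain ⟨hQ0, hQ1⟩ := sq_norm q h0 h1
  have hs1 := AA_summable q x h0 h1 hx 0
  simp only [add_zero] at hs1
  have hs2 := AA_summable q (x * q ^ 2) h0 h1 (by positivity) 0
  simp only [add_zero] at hs2
  have : AA q x - AA q (x * q ^ 2) = x * AA q (x * q ^ 2) := by
    simp only [AA]
    rw [← hs1.tsum_sub hs2, ← tsum_mul_left, ← (Equiv.addRight (1 : ℤ)).tsum_eq]
    refine tsum_congr fun s => ?_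
    simp only [Equiv.coe_addRight]
    have a := uu_rec (q ^ 2) hQ1 (s + 1)
    rw [add_sub_cancel_right] at a
    rw [← a, mul_zpow, mul_zpow, sq_zpow, sq_zpow, zpow_add_one₀ hx]
    have e : q ^ ((s + 1) ^ 2 - (s + 1)) = q ^ (s ^ 2 - s) * q ^ (2 * s) := by
      rw [← zpow_add₀ hq0]; congr 1; ring
    rw [e]; ring
  linear_combination this

lemma AA_iter (q x : ℂ) (h0 : 0 < ‖q‖) (h1 : ‖q‖ < 1) (hx : x ≠ 0) (n : ℕ) :
    AA q x = qPoch (-x) (q ^ 2) n * AA q (x * (q ^ 2) ^ n) := by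
  have hq0 : q ≠ 0 := norm_pos_iff.mp h0
  induction n with
  | zero => simp [qPoch]
  | succ n ih =>
    rw [ih, AA_rec q _ h0 h1 (by positivity), qPoch, qPoch, Finset.prod_range_succ, pow_succ]
    ring_nf

lemma euler_s7 (q x : ℂ) (h0 : 0 < ‖q‖) (h1 : ‖q‖ < 1) (hx : x ≠ 0) :
    AA q x = qPochInf (-x) (q ^ 2) := by
  have hq0 : q ≠ 0 := norm_pos_iff.mp h0
  obtain ⟨hQ0, hQ1⟩ := sq_norm q h0 h1
  obtain ⟨K, hK0, hK⟩ := uu_bdd (q ^ 2) hQ1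
  have hx' : 0 < ‖x‖ := norm_pos_iff.mpr hx
  have t := tendsto_tsum_of_dominated_convergence (𝓕 := atTop)
    (f := fun (n : ℕ) (s : ℤ) => q ^ (s ^ 2 - s) * (x * (q ^ 2) ^ n) ^ s * uu (q ^ 2) s)
    (g := fun s => if s = 0 then 1 else 0) (AA_bound q x h0 h1 hx K) ?_ ?_
  · rw [tsum_ite_eq] at t
    have t2 := (qp_tendsto (-x) (q ^ 2) hQ1).mul t
    rw [mul_one] at t2
    exact tendsto_nhds_unique (tendsto_const_nhds.congr fun n => AA_iter q x h0 h1 hx n) t2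
  · intro s
    rcases lt_trichotomy s 0 with h | h | h
    · simp only [uu_neg _ h, mul_zero, h.ne, if_false]; exact tendsto_const_nhds
    · subst h; simp [uu_zero]
    · obtain ⟨m, rfl⟩ := Int.eq_ofNat_of_zero_le h.le
      rw [if_neg h.ne']
      have hm : m ≠ 0 := by rintro rfl; simp at h
      have b : Tendsto (fun n : ℕ => x * (q ^ 2) ^ n) atTop (𝓝 (x * 0)) :=
        (tendsto_pow_atTop_nhds_zero_of_norm_lt_one hQ1).const_mul x
      rw [mul_zero] at b
      have c := ((b.pow m).const_mul (q ^ ((m : ℤ) ^ 2 - m))).mul_const (uu (q ^ 2) m)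
      rw [zero_pow hm, mul_zero, zero_mul] at c
      exact c
  · refine Eventually.of_forall fun n s => ?_
    rcases lt_or_ge s 0 with h | h
    · simp only [uu_neg _ h, mul_zero, norm_zero]; positivity
    · obtain ⟨m, rfl⟩ := Int.eq_ofNat_of_zero_le h
      rw [norm_mul, norm_mul, norm_zpow, norm_zpow]
      have : ‖x * (q ^ 2) ^ n‖ ≤ ‖x‖ := by
        rw [norm_mul, norm_pow]
        exact mul_le_of_le_one_right hx'.le (pow_le_one₀ hQ0.le hQ1.le)
      rw [zpow_natCast, zpow_natCast ‖x‖]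
      gcongr; apply hK

lemma jtp (q z : ℂ) (h0 : 0 < ‖q‖) (h1 : ‖q‖ < 1) (hz : z ≠ 0) :
    ∑' m : ℤ, q ^ (m ^ 2) * z ^ m =
      qPochInf (-(q * z)) (q ^ 2) * qPochInf (-(q * z⁻¹)) (q ^ 2) * qPochInf (q ^ 2) (q ^ 2) := by
  have hq0 : q ≠ 0 := norm_pos_iff.mp h0
  obtain ⟨hQ0, hQ1⟩ := sq_norm q h0 h1
  have hne := qpi_ne _ _ hQ1 hQ1
  rw [← div_eq_iff hne, div_eq_mul_inv, ← euler_s7 q _ h0 h1 (by positivity),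
    ← euler_s7 q _ h0 h1 (by positivity), ← tsum_mul_right]
  have hs1 := AA_summable q (q * z) h0 h1 (by positivity) 0
  have hs2 := AA_summable q (q * z⁻¹) h0 h1 (by positivity) 0
  simp only [add_zero] at hs1 hs2
  have hs := summable_mul_of_summable_norm hs1.norm hs2.norm
  rw [AA, AA, tsum_mul_tsum_of_summable_norm hs1.norm hs2.norm]
  let e : ℤ × ℤ ≃ ℤ × ℤ :=
    { toFun := fun p => (p.2 + p.1, p.2)
      invFun := fun p => (p.1 - p.2, p.2)
      left_inv := fun p => Prod.ext (by ring) rfl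
      right_inv := fun p => Prod.ext (by ring) rfl }
  have hs' := e.summable_iff.mpr hs
  simp only [Function.comp_def] at hs'
  rw [← e.tsum_eq, Summable.tsum_prod hs']
  refine tsum_congr fun m => ?_
  rw [← durfee_s7 (q ^ 2) hQ0 hQ1 m, ← tsum_mul_left]
  refine tsum_congr fun a => ?_
  simp only [e, Equiv.coe_fn_mk]
  rw [sq_zpow, mul_zpow, mul_zpow, inv_zpow, zpow_add₀ hz]
  have hza : z ^ a ≠ 0 := zpow_ne_zero _ hz
  have e1 : q ^ (m ^ 2) * q ^ (2 * (a * (a + m))) =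
      q ^ ((a + m) ^ 2 - (a + m)) * q ^ (a + m) * (q ^ (a ^ 2 - a) * q ^ a) := by
    simp only [← zpow_add₀ hq0]; congr 1; ring
  field_simp
  linear_combination (uu (q ^ 2) a * uu (q ^ 2) (a + m)) * e1

lemma DD_summable (q : ℂ) (h0 : 0 < ‖q‖) (h1 : ‖q‖ < 1) (s d k1 k2 k3 : ℤ) (e : ℤ × ℤ → ℤ)
    (he : ∀ p, e p = (s - p.1 - 2 * p.2) ^ 2 + d * (s - p.1 - 2 * p.2) + p.1 ^ 2) :
    Summable fun p : ℤ × ℤ => q ^ (e p) *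
      uu (q ^ 2) (s - p.1 - 2 * p.2 - k1) * uu (q ^ 2) (p.1 - k2) * uu (q ^ 2) (p.2 - k3) := by
  obtain ⟨hQ0, hQ1⟩ := sq_norm q h0 h1
  obtain ⟨K, hK0, hK⟩ := uu_bdd (q ^ 2) hQ1
  have hp := (Summable.mul_of_nonneg (sum_quad ‖q‖ h0 h1 d 0) (sum_quad ‖q‖ h0 h1 0 0)
    (fun n => by positivity) (fun n => by positivity)).mul_right (K * K * K)
  have hinj : Function.Injective (fun p : ℤ × ℤ => (s - p.1 - 2 * p.2, p.1)) := by
    rintro ⟨a, b⟩ ⟨c, d⟩ h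
    simp only [Prod.mk.injEq] at h ⊢
    omega
  refine Summable.of_norm_bounded (hp.comp_injective hinj) fun p => ?_
  simp only [Function.comp]
  rw [norm_mul, norm_mul, norm_mul, norm_zpow, he, mul_assoc, mul_assoc, ← zpow_add₀ h0.ne',
    mul_assoc K]
  rw [show (s - p.1 - 2 * p.2) ^ 2 + d * (s - p.1 - 2 * p.2) + 0 + (p.1 ^ 2 + 0 * p.1 + 0) =
    (s - p.1 - 2 * p.2) ^ 2 + d * (s - p.1 - 2 * p.2) + p.1 ^ 2 by ring]
  gcongr <;> apply hK

noncomputable def DD (q : ℂ) (d s : ℤ) : ℂ :=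
  ∑' p : ℤ × ℤ, q ^ ((s - p.1 - 2 * p.2) ^ 2 + d * (s - p.1 - 2 * p.2) + p.1 ^ 2) *
    uu (q ^ 2) (s - p.1 - 2 * p.2) * uu (q ^ 2) p.1 * uu (q ^ 2) p.2

lemma DD_summable' (q : ℂ) (h0 : 0 < ‖q‖) (h1 : ‖q‖ < 1) (d s : ℤ) :
    Summable fun p : ℤ × ℤ =>
    q ^ ((s - p.1 - 2 * p.2) ^ 2 + d * (s - p.1 - 2 * p.2) + p.1 ^ 2) *
    uu (q ^ 2) (s - p.1 - 2 * p.2) * uu (q ^ 2) p.1 * uu (q ^ 2) p.2 := by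
  simpa using DD_summable q h0 h1 s d 0 0 0 _ (fun p => rfl)

lemma DD_rec1 (q : ℂ) (h0 : 0 < ‖q‖) (h1 : ‖q‖ < 1) (s : ℤ) :
    DD q (-1) s = DD q 1 s + DD q 1 (s - 1) := by
  have hq0 : q ≠ 0 := norm_pos_iff.mp h0
  obtain ⟨hQ0, hQ1⟩ := sq_norm q h0 h1
  rw [DD, DD, DD, ← (DD_summable' q h0 h1 1 s).tsum_add (DD_summable' q h0 h1 1 (s - 1))]
  refine tsum_congr fun p => ?_
  have a := uu_rec (q ^ 2) hQ1 (s - p.1 - 2 * p.2)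
  rw [show s - p.1 - 2 * p.2 - 1 = s - 1 - p.1 - 2 * p.2 by ring] at a
  rw [← a, sq_zpow]
  set j := s - p.1 - 2 * p.2 with hj
  rw [show s - 1 - p.1 - 2 * p.2 = j - 1 by rw [hj]; ring]
  rw [show (j - 1) ^ 2 + 1 * (j - 1) + p.1 ^ 2 = j ^ 2 + -1 * j + p.1 ^ 2 by ring,
    show j ^ 2 + 1 * j + p.1 ^ 2 = (j ^ 2 + -1 * j + p.1 ^ 2) + 2 * j by ring, zpow_add₀ hq0 _ (2 * j)]
  ring

lemma DD_rec2 (q : ℂ) (h0 : 0 < ‖q‖) (h1 : ‖q‖ < 1) (s : ℤ) :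
    (1 - q ^ s) * DD q (-1) s = DD q (-1) (s - 1) := by
  have hq0 : q ≠ 0 := norm_pos_iff.mp h0
  obtain ⟨hQ0, hQ1⟩ := sq_norm q h0 h1
  rw [DD_rec1 q h0 h1 (s - 1), show s - 1 - 1 = s - 2 by ring]
  let sw : ℤ × ℤ ≃ ℤ × ℤ :=
    { toFun := fun p => (s - p.1 - 2 * p.2, p.2)
      invFun := fun p => (s - p.1 - 2 * p.2, p.2)
      left_inv := fun p => Prod.ext (by ring) rfl
      right_inv := fun p => Prod.ext (by ring) rfl }
  let sh : ℤ × ℤ ≃ ℤ × ℤ :=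
    { toFun := fun p => (p.1, p.2 - 1)
      invFun := fun p => (p.1, p.2 + 1)
      left_inv := fun p => by simp
      right_inv := fun p => by simp }
  have hD := DD_summable' q h0 h1 (-1) s
  have e1 : q ^ s * DD q (-1) s = ∑' p : ℤ × ℤ,
      q ^ ((s - p.1 - 2 * p.2) ^ 2 + 1 * (s - p.1 - 2 * p.2) + p.1 ^ 2 + 2 * p.2) *
      uu (q ^ 2) (s - p.1 - 2 * p.2) * uu (q ^ 2) p.1 * uu (q ^ 2) p.2 := by
    rw [DD, ← tsum_mul_left, ← sw.tsum_eq]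
    refine tsum_congr fun p => ?_
    simp only [sw, Equiv.coe_fn_mk]
    rw [show s - (s - p.1 - 2 * p.2) - 2 * p.2 = p.1 by ring,
      show (s - p.1 - 2 * p.2) ^ 2 + 1 * (s - p.1 - 2 * p.2) + p.1 ^ 2 + 2 * p.2 =
      s + (p.1 ^ 2 + -1 * p.1 + (s - p.1 - 2 * p.2) ^ 2) by ring, zpow_add₀ hq0 s]
    ring
  have hM : Summable fun p : ℤ × ℤ =>
      q ^ ((s - p.1 - 2 * p.2) ^ 2 + 1 * (s - p.1 - 2 * p.2) + p.1 ^ 2 + 2 * p.2) *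
      uu (q ^ 2) (s - p.1 - 2 * p.2) * uu (q ^ 2) p.1 * uu (q ^ 2) p.2 := by
    have := sw.summable_iff.mpr (hD.mul_left (q ^ s))
    refine this.congr fun p => ?_
    simp only [sw, Equiv.coe_fn_mk, Function.comp]
    rw [show s - (s - p.1 - 2 * p.2) - 2 * p.2 = p.1 by ring,
      show (s - p.1 - 2 * p.2) ^ 2 + 1 * (s - p.1 - 2 * p.2) + p.1 ^ 2 + 2 * p.2 =
      s + (p.1 ^ 2 + -1 * p.1 + (s - p.1 - 2 * p.2) ^ 2) by ring, zpow_add₀ hq0 s]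
    ring
  have hD2 := sh.summable_iff.mpr (DD_summable' q h0 h1 1 (s - 2))
  have e2 : DD q 1 (s - 2) = ∑' p : ℤ × ℤ, ((fun p : ℤ × ℤ =>
    q ^ ((s - 2 - p.1 - 2 * p.2) ^ 2 + 1 * (s - 2 - p.1 - 2 * p.2) + p.1 ^ 2) *
    uu (q ^ 2) (s - 2 - p.1 - 2 * p.2) * uu (q ^ 2) p.1 * uu (q ^ 2) p.2) ∘ sh) p := by
    rw [DD, ← sh.tsum_eq]; rfl
  rw [sub_mul, one_mul, e1, e2, DD, DD, ← hD.tsum_sub hM,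
    ← (DD_summable' q h0 h1 1 (s - 1)).tsum_add hD2]
  refine tsum_congr fun p => ?_
  simp only [sh, Equiv.coe_fn_mk, Function.comp]
  have a := uu_rec (q ^ 2) hQ1 (s - p.1 - 2 * p.2)
  rw [show s - p.1 - 2 * p.2 - 1 = s - 1 - p.1 - 2 * p.2 by ring] at a
  have b := uu_rec (q ^ 2) hQ1 p.2
  rw [← a, ← b, sq_zpow, sq_zpow]
  rw [show s - 2 - p.1 - 2 * (p.2 - 1) = s - p.1 - 2 * p.2 by ring]
  set j := s - p.1 - 2 * p.2 with hj
  rw [show s - 1 - p.1 - 2 * p.2 = j - 1 by rw [hj]; ring]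
  rw [show (j - 1) ^ 2 + 1 * (j - 1) + p.1 ^ 2 = j ^ 2 + -1 * j + p.1 ^ 2 by ring,
    show j ^ 2 + 1 * j + p.1 ^ 2 = (j ^ 2 + -1 * j + p.1 ^ 2) + 2 * j by ring,
    zpow_add₀ hq0 _ (2 * p.2), zpow_add₀ hq0 _ (2 * j)]
  ring

lemma DD_eq (q : ℂ) (h0 : 0 < ‖q‖) (h1 : ‖q‖ < 1) (s : ℤ) : DD q (-1) s = uu q s := by
  rcases lt_or_ge s 0 with h | h
  · rw [uu_neg _ h, DD]
    convert tsum_zero with p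
    rcases lt_or_ge p.1 0 with h' | h'
    · rw [uu_neg _ h']; simp
    rcases lt_or_ge p.2 0 with h'' | h''
    · rw [uu_neg _ h'']; simp
    · rw [uu_neg _ (n := s - p.1 - 2 * p.2) (by omega)]; simp
  · obtain ⟨m, rfl⟩ := Int.eq_ofNat_of_zero_le h
    clear h
    induction m with
    | zero =>
      rw [DD, tsum_eq_single (0, 0)]
      · simp [uu_zero]
      · rintro ⟨a, b⟩ hc
        rcases lt_or_ge a 0 with h' | h'
        · simp [uu_neg _ h']
        rcases lt_or_ge b 0 with h'' | h''
        · simp [uu_neg _ h'']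
        · simp only
          rw [uu_neg _ (n := ((0 : ℕ) : ℤ) - a - 2 * b)]
          · simp
          · simp only [ne_eq, Prod.mk.injEq] at hc; omega
    | succ m ih =>
      have a := DD_rec2 q h0 h1 ((m + 1 : ℕ) : ℤ)
      have b := uu_rec q h1 ((m + 1 : ℕ) : ℤ)
      rw [show ((m + 1 : ℕ) : ℤ) - 1 = m by push_cast; ring] at a b
      rw [ih, ← b] at a
      have hne : (1 - q ^ ((m + 1 : ℕ) : ℤ)) ≠ 0 := by
        rw [zpow_natCast, pow_succ']; exact qp_factor_ne q q h1 h1 m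
      exact mul_left_cancel₀ hne a
lemma tsum_int_even_odd (f : ℤ → ℂ) (hf : Summable f) :
    ∑' n, f n = ∑' n, f (2 * n) + ∑' n, f (2 * n + 1) := by
  have i1 : Function.Injective (fun n : ℤ => 2 * n) := fun a b h => by simpa using h
  have i2 : Function.Injective (fun n : ℤ => 2 * n + 1) := fun a b h => by simpa using h
  have s1 := (hf.comp_injective i1).hasSum
  have s2 := (hf.comp_injective i2).hasSum
  have s1' := i1.hasSum_range_iff.2 s1
  have s2' := i2.hasSum_range_iff.2 s2
  refine (HasSum.add_isCompl ?_ s1' s2').tsum_eq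
  have h1 : Set.range (fun n : ℤ => 2 * n) = {n | Even n} := by
    ext n; simp [even_iff_exists_two_mul]
  have h2 : Set.range (fun n : ℤ => 2 * n + 1) = {n | Odd n} := by
    ext n; simp [Odd]
  rw [h1, h2]
  exact Int.isCompl_even_odd

lemma parity_transfer (f g : ℤ → ℂ) (hf : Summable f) (hg : Summable g) (c : ℂ)
    (h1 : (∑' n, f n) * c = ∑' n, g n)
    (h2 : (∑' n, (-1) ^ n * f n) * c = ∑' n, (-1) ^ n * g n) :
    (∑' n, f (2 * n)) * c = ∑' n, g (2 * n) ∧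
    (∑' n, f (2 * n + 1)) * c = ∑' n, g (2 * n + 1) := by
  have key : ∀ f : ℤ → ℂ, Summable f →
      ∑' n, (-1) ^ n * f n = ∑' n, f (2 * n) - ∑' n, f (2 * n + 1) := by
    intro f hf
    rw [tsum_int_even_odd, sub_eq_add_neg, ← tsum_neg]
    · congr 1
      · refine tsum_congr fun n => ?_
        rw [(even_two_mul n).neg_one_zpow, one_mul]
      · refine tsum_congr fun n => ?_
        rw [(odd_two_mul_add_one n).neg_one_zpow, neg_one_mul]
    · refine Summable.of_norm_bounded hf.norm fun n => ?_
      simp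
  rw [key f hf, key g hg] at h2
  rw [tsum_int_even_odd f hf, tsum_int_even_odd g hg] at h1
  constructor
  · linear_combination (h1 + h2) / 2
  · linear_combination (h1 - h2) / 2

lemma qpi_dissect (a q : ℂ) (hq : ‖q‖ < 1) :
    qPochInf a q = qPochInf a (q ^ 2) * qPochInf (a * q) (q ^ 2) := by
  have hQ : ‖q ^ 2‖ < 1 := by rw [norm_pow]; nlinarith [norm_nonneg q]
  have m1 := qp_mult a (q ^ 2) hQ
  have m2 := qp_mult (a * q) (q ^ 2) hQ
  have e1 : ∀ n : ℕ, 1 - a * (q ^ 2) ^ n = 1 - a * q ^ (2 * n) := fun n => by rw [pow_mul]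
  have e2 : ∀ n : ℕ, 1 - a * q * (q ^ 2) ^ n = 1 - a * q ^ (2 * n + 1) := fun n => by
    rw [pow_succ q (2 * n), pow_mul]; ring
  simp only [qPochInf]
  simp only [e1, e2] at m1 m2 ⊢
  exact (tprod_even_mul_odd (f := fun n => 1 - a * q ^ n) m1 m2).symm

lemma qpi_sq (a q : ℂ) (hq : ‖q‖ < 1) :
    qPochInf (a ^ 2) (q ^ 2) = qPochInf a q * qPochInf (-a) q := by
  simp only [qPochInf]
  rw [← (qp_mult a q hq).tprod_mul (qp_mult (-a) q hq)]
  refine tprod_congr fun n => ?_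
  ring

lemma qpi_peel (a q : ℂ) (hq : ‖q‖ < 1) :
    qPochInf a q = (1 - a) * qPochInf (a * q) q := by
  have := (qp_tendsto a q hq).comp (tendsto_add_atTop_nat 1)
  have h2 := (qp_tendsto (a * q) q hq).const_mul (1 - a)
  refine tendsto_nhds_unique this (h2.congr fun n => ?_)
  simp only [Function.comp, qPoch, Finset.prod_range_succ']
  rw [mul_comm]
  congr 1
  · refine Finset.prod_congr rfl fun k _ => ?_
    ring
  · simp

lemma slater (r : ℂ) (h0 : 0 < ‖r‖) (h1 : ‖r‖ < 1) :
    (∑' n : ℤ, (r ^ 2) ^ (2 * n ^ 2) * uu (r ^ 2) (2 * n)) * qPochInf (r ^ 4) (r ^ 4) =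
      ∑' n : ℤ, (r ^ 2) ^ (4 * n ^ 2 - n) ∧
    (∑' n : ℤ, (r ^ 2) ^ (2 * n ^ 2 + 2 * n) * uu (r ^ 2) (2 * n + 1)) * qPochInf (r ^ 4) (r ^ 4) =
      ∑' n : ℤ, (r ^ 2) ^ (4 * n ^ 2 + 3 * n) := by
  have hr : r ≠ 0 := norm_pos_iff.mp h0
  obtain ⟨hQ0, hQ1⟩ := sq_norm r h0 h1
  have base : ∀ x : ℂ, x * x = 1 →
      (∑' n : ℤ, x ^ n * (r ^ (n ^ 2) * uu (r ^ 2) n)) * qPochInf (r ^ 4) (r ^ 4) =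
      ∑' n : ℤ, x ^ n * r ^ (2 * n ^ 2 - n) := by
    intro x hxx
    have hx : x ≠ 0 := left_ne_zero_of_mul_eq_one hxx
    have hxi : x⁻¹ = x := by rw [inv_eq_iff_eq_inv]; exact eq_inv_of_mul_eq_one_left hxx
    have e1 : ∑' n : ℤ, x ^ n * (r ^ (n ^ 2) * uu (r ^ 2) n) = AA r (r * x) := by
      refine tsum_congr fun n => ?_
      rw [mul_zpow, zpow_sub₀ hr]
      have : r ^ n ≠ 0 := zpow_ne_zero _ hr
      field_simp
    have e2 : ∑' n : ℤ, x ^ n * r ^ (2 * n ^ 2 - n) =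
        ∑' n : ℤ, (r ^ 2) ^ (n ^ 2) * (x * r⁻¹) ^ n := by
      refine tsum_congr fun n => ?_
      rw [sq_zpow, mul_zpow, inv_zpow, zpow_sub₀ hr]; ring
    rw [e1, e2, jtp (r ^ 2) _ hQ0 hQ1 (by positivity), euler_s7 r _ h0 h1 (by positivity),
      qpi_dissect _ _ hQ1, mul_inv, inv_inv, hxi]
    rw [show r ^ 2 * (x * r⁻¹) = r * x by field_simp, show r ^ 2 * (x * r) = r * x * r ^ 2 by ring,
      show (r ^ 2) ^ 2 = r ^ 4 by ring, neg_mul]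
  have hsf : Summable fun n : ℤ => r ^ (n ^ 2) * uu (r ^ 2) n := by
    have := AA_summable r r h0 h1 hr 0
    refine this.congr fun n => ?_
    rw [add_zero, ← zpow_add₀ hr, sub_add_cancel]
  have hsg : Summable fun n : ℤ => r ^ (2 * n ^ 2 - n) := by
    refine Summable.of_norm ?_
    have := sum_th (‖r‖ ^ 2) ‖r‖⁻¹ (by positivity) (by nlinarith) (by positivity)
    refine this.congr fun n => ?_
    rw [norm_zpow, zpow_sub₀ h0.ne', inv_zpow, zpow_mul]; norm_cast
  have b1 := base 1 (by ring)
  have b2 := base (-1) (by ring)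
  simp only [one_zpow, one_mul] at b1
  obtain ⟨p1, p2⟩ := parity_transfer _ _ hsf hsg _ b1 b2
  constructor
  · convert p1 using 3 with n
    · congr 2 with n
      rw [sq_zpow]; congr 2; ring
    · rw [sq_zpow]; congr 1; ring
  · have e1 : ∑' n : ℤ, r ^ ((2 * n + 1) ^ 2) * uu (r ^ 2) (2 * n + 1) =
        r * ∑' n : ℤ, (r ^ 2) ^ (2 * n ^ 2 + 2 * n) * uu (r ^ 2) (2 * n + 1) := by
      rw [← tsum_mul_left]
      refine tsum_congr fun n => ?_
      rw [sq_zpow, ← mul_assoc, mul_comm r, ← zpow_add_one₀ hr]; congr 2; ring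
    have e2 : ∑' n : ℤ, r ^ (2 * (2 * n + 1) ^ 2 - (2 * n + 1)) =
        r * ∑' n : ℤ, (r ^ 2) ^ (4 * n ^ 2 + 3 * n) := by
      rw [← tsum_mul_left]
      refine tsum_congr fun n => ?_
      rw [sq_zpow, mul_comm r, ← zpow_add_one₀ hr]; congr 1; ring
    rw [e1, e2, mul_assoc] at p2
    exact mul_left_cancel₀ hr p2

lemma F5_summable (q : ℂ) (h0 : 0 < ‖q‖) (h1 : ‖q‖ < 1) :
    Summable fun x : (ℤ × ℤ) × (ℤ × (ℤ × ℤ)) =>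
      q ^ (x.1.1 ^ 2 + (x.1.1 - x.1.2) ^ 2) *
      (((q ^ 2) ^ (x.2.1 * (x.2.1 + x.1.1)) * uu (q ^ 2) x.2.1 * uu (q ^ 2) (x.2.1 + x.1.1)) *
       (q ^ ((x.1.2 - x.2.2.1 - 2 * x.2.2.2) ^ 2 + (-1) * (x.1.2 - x.2.2.1 - 2 * x.2.2.2)
          + x.2.2.1 ^ 2) *
        uu (q ^ 2) (x.1.2 - x.2.2.1 - 2 * x.2.2.2) * uu (q ^ 2) x.2.2.1 * uu (q ^ 2) x.2.2.2)) := by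
  have hq0 : q ≠ 0 := norm_pos_iff.mp h0
  obtain ⟨hQ0, hQ1⟩ := sq_norm q h0 h1
  obtain ⟨K, hK0, hK⟩ := uu_bdd (q ^ 2) hQ1
  have s0 := sum_quad ‖q‖ h0 h1 0 0
  have s1 := sum_quad ‖q‖ h0 h1 (-1) 0
  have p2 := Summable.mul_of_nonneg s1 s0 (fun n => by positivity) (fun n => by positivity)
  have p3 := Summable.mul_of_nonneg s0 p2 (fun n => by positivity) (fun n => by positivity)
  have p4 := Summable.mul_of_nonneg s0 p3 (fun n => by positivity)
    (fun n => by simp only [Pi.zero_apply]; positivity)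
  have p5 := Summable.mul_of_nonneg s0 p4 (fun n => by positivity)
    (fun n => by simp only [Pi.zero_apply]; positivity)
  have hinj : Function.Injective (fun x : (ℤ × ℤ) × (ℤ × (ℤ × ℤ)) =>
      (x.2.1 + x.1.1, x.2.1, x.1.1 - x.1.2, x.1.2 - x.2.2.1 - 2 * x.2.2.2, x.2.2.1)) := by
    rintro ⟨⟨m, s⟩, ⟨a, ⟨b, c⟩⟩⟩ ⟨⟨m', s'⟩, ⟨a', ⟨b', c'⟩⟩⟩ h
    simp only [Prod.mk.injEq] at h ⊢
    omega
  refine Summable.of_norm_bounded ((p5.comp_injective hinj).mul_right (K * K * (K * K * K)))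
    fun x => ?_
  obtain ⟨⟨m, s⟩, ⟨a, ⟨b, c⟩⟩⟩ := x
  simp only [Function.comp, ← zpow_add₀ h0.ne']
  rw [sq_zpow]
  set j := s - b - 2 * c
  have e : q ^ (m ^ 2 + (m - s) ^ 2) *
      ((q ^ (2 * (a * (a + m))) * uu (q ^ 2) a * uu (q ^ 2) (a + m)) *
       (q ^ (j ^ 2 + (-1) * j + b ^ 2) * uu (q ^ 2) j * uu (q ^ 2) b * uu (q ^ 2) c)) =
     q ^ ((a + m) ^ 2 + 0 * (a + m) + 0 + (a ^ 2 + 0 * a + 0 + ((m - s) ^ 2 + 0 * (m - s) + 0 +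
       (j ^ 2 + -1 * j + 0 + (b ^ 2 + 0 * b + 0))))) *
      ((uu (q ^ 2) a * uu (q ^ 2) (a + m)) * (uu (q ^ 2) j * uu (q ^ 2) b * uu (q ^ 2) c)) := by
    rw [show (a + m) ^ 2 + 0 * (a + m) + 0 + (a ^ 2 + 0 * a + 0 + ((m - s) ^ 2 + 0 * (m - s) + 0 +
       (j ^ 2 + -1 * j + 0 + (b ^ 2 + 0 * b + 0)))) = (m ^ 2 + (m - s) ^ 2) + (2 * (a * (a + m))) +
       (j ^ 2 + (-1) * j + b ^ 2) by ring, zpow_add₀ hq0 _ (j ^ 2 + (-1) * j + b ^ 2),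
       zpow_add₀ hq0 _ (2 * (a * (a + m)))]
    ring
  rw [e]
  simp only [norm_mul, norm_zpow]
  gcongr <;> apply hK

lemma chain1 (q : ℂ) (h0 : 0 < ‖q‖) (h1 : ‖q‖ < 1) :
    ∑' p : ℤ × ℤ × ℤ × ℤ, q ^ (p.1 ^ 2 + p.2.1 ^ 2 - p.2.1 + (p.1 - p.2.1 - p.2.2.1 - p.2.2.2) ^ 2
        + (p.2.2.1 - p.2.2.2) ^ 2) * uu (q ^ 2) p.1 * uu (q ^ 2) p.2.1 *
        (uu (q ^ 2) p.2.2.1 * uu (q ^ 2) p.2.2.2) =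
    ∑' x : ℤ × ℤ, q ^ (x.1 ^ 2 + (x.1 - x.2) ^ 2) * ((qPochInf (q ^ 2) (q ^ 2))⁻¹ * uu q x.2) := by
  have hq0 : q ≠ 0 := norm_pos_iff.mp h0
  obtain ⟨hQ0, hQ1⟩ := sq_norm q h0 h1
  obtain ⟨K, hK0, hK⟩ := uu_bdd (q ^ 2) hQ1
  let e5 : (ℤ × ℤ) × (ℤ × (ℤ × ℤ)) ≃ (ℤ × ℤ × ℤ × ℤ) × ℤ :=
    { toFun := fun x => ((x.2.1 + x.1.1, x.1.2 - x.2.2.1 - 2 * x.2.2.2, x.2.1 + x.2.2.2,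
        x.2.2.1 + x.2.2.2), x.2.2.2)
      invFun := fun y => ((y.1.1 - y.1.2.2.1 + y.2, y.1.2.1 + y.1.2.2.2 + y.2),
        (y.1.2.2.1 - y.2, (y.1.2.2.2 - y.2, y.2)))
      left_inv := by
        rintro ⟨⟨m, s⟩, ⟨a, ⟨b, c⟩⟩⟩
        refine Prod.ext (Prod.ext ?_ ?_) (Prod.ext ?_ (Prod.ext ?_ ?_)) <;> (try dsimp only) <;> ring
      right_inv := by
        rintro ⟨⟨i, j, k, l⟩, c⟩
        refine Prod.ext (Prod.ext ?_ (Prod.ext ?_ (Prod.ext ?_ ?_))) ?_ <;> (try dsimp only) <;> ring }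
  let F5 : (ℤ × ℤ × ℤ × ℤ) × ℤ → ℂ := fun y =>
    q ^ (y.1.1 ^ 2 + y.1.2.1 ^ 2 - y.1.2.1 + (y.1.1 - y.1.2.1 - y.1.2.2.1 - y.1.2.2.2) ^ 2
        + (y.1.2.2.1 - y.1.2.2.2) ^ 2) * uu (q ^ 2) y.1.1 * uu (q ^ 2) y.1.2.1 *
      ((q ^ 2) ^ ((y.1.2.2.1 - y.2) * (y.1.2.2.2 - y.2)) * uu (q ^ 2) (y.1.2.2.1 - y.2) *
        uu (q ^ 2) (y.1.2.2.2 - y.2) * uu (q ^ 2) y.2)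
  have hF := F5_summable q h0 h1
  have hFe : ∀ x : (ℤ × ℤ) × (ℤ × (ℤ × ℤ)), F5 (e5 x) =
      q ^ (x.1.1 ^ 2 + (x.1.1 - x.1.2) ^ 2) *
      (((q ^ 2) ^ (x.2.1 * (x.2.1 + x.1.1)) * uu (q ^ 2) x.2.1 * uu (q ^ 2) (x.2.1 + x.1.1)) *
       (q ^ ((x.1.2 - x.2.2.1 - 2 * x.2.2.2) ^ 2 + (-1) * (x.1.2 - x.2.2.1 - 2 * x.2.2.2)
          + x.2.2.1 ^ 2) *
        uu (q ^ 2) (x.1.2 - x.2.2.1 - 2 * x.2.2.2) * uu (q ^ 2) x.2.2.1 * uu (q ^ 2) x.2.2.2)) := by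
    rintro ⟨⟨m, s⟩, ⟨a, ⟨b, c⟩⟩⟩
    simp only [F5, e5, Equiv.coe_fn_mk]
    rw [sq_zpow, sq_zpow, add_sub_cancel_right, add_sub_cancel_right]
    have e : q ^ (m ^ 2 + (m - s) ^ 2) * q ^ (2 * (a * (a + m))) *
        q ^ ((s - b - 2 * c) ^ 2 + (-1) * (s - b - 2 * c) + b ^ 2) =
        q ^ ((a + m) ^ 2 + (s - b - 2 * c) ^ 2 - (s - b - 2 * c) +
          (a + m - (s - b - 2 * c) - (a + c) - (b + c)) ^ 2 + (a + c - (b + c)) ^ 2) *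
        q ^ (2 * (a * b)) := by
      simp only [← zpow_add₀ hq0]; congr 1; ring
    linear_combination (-uu (q ^ 2) a * uu (q ^ 2) (a + m) * uu (q ^ 2) (s - b - 2 * c) *
      uu (q ^ 2) b * uu (q ^ 2) c) * e
  have hF5 : Summable F5 := by
    refine e5.summable_iff.mp (hF.congr fun x => ?_)
    exact (hFe x).symm
  trans ∑' y, F5 y
  · rw [Summable.tsum_prod hF5]
    refine tsum_congr fun p => ?_
    simp only [F5]
    rw [tsum_mul_left, ← VV_eq (q ^ 2) hQ0 hQ1]
    rfl
  · rw [← e5.tsum_eq F5, tsum_congr hFe, Summable.tsum_prod hF]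
    refine tsum_congr fun x => ?_
    have hd : Summable fun a : ℤ =>
        (q ^ 2) ^ (a * (a + x.1)) * uu (q ^ 2) a * uu (q ^ 2) (a + x.1) := by
      refine Summable.of_norm_bounded ((sum_quad ‖q ^ 2‖ hQ0 hQ1 x.1 0).mul_right (K * K))
        fun a => ?_
      rw [norm_mul, norm_mul, norm_zpow, mul_assoc,
        show a * (a + x.1) = a ^ 2 + x.1 * a + 0 by ring]
      gcongr <;> apply hK
    simp only
    rw [tsum_mul_left, ← DD_eq q h0 h1, ← durfee_s7 (q ^ 2) hQ0 hQ1 x.1, DD,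
      tsum_mul_tsum_of_summable_norm hd.norm (DD_summable' q h0 h1 (-1) x.2).norm]
lemma chain2 (q : ℂ) (h0 : 0 < ‖q‖) (h1 : ‖q‖ < 1) :
    ∑' x : ℤ × ℤ, q ^ (x.1 ^ 2 + (x.1 - x.2) ^ 2) * ((qPochInf (q ^ 2) (q ^ 2))⁻¹ * uu q x.2) =
    (qPochInf (q ^ 2) (q ^ 2))⁻¹ * (
      (∑' t : ℤ, q ^ (2 * t ^ 2)) * (∑' n : ℤ, q ^ (2 * n ^ 2) * uu q (2 * n)) +
      q * (∑' t : ℤ, q ^ (2 * t ^ 2 + 2 * t)) *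
        (∑' n : ℤ, q ^ (2 * n ^ 2 + 2 * n) * uu q (2 * n + 1))) := by
  have hq0 : q ≠ 0 := norm_pos_iff.mp h0
  obtain ⟨K, hK0, hK⟩ := uu_bdd q h1
  set U := (qPochInf (q ^ 2) (q ^ 2))⁻¹ with hU
  have hs : Summable fun x : ℤ × ℤ => U * (uu q x.1 * q ^ (x.2 ^ 2 + (x.2 - x.1) ^ 2)) := by
    refine Summable.mul_left _ ?_
    have s0 := sum_quad ‖q‖ h0 h1 0 0
    have p2 := Summable.mul_of_nonneg s0 s0 (fun n => by positivity) (fun n => by positivity)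
    have hinj : Function.Injective (fun x : ℤ × ℤ => (x.2, x.2 - x.1)) := by
      rintro ⟨a, b⟩ ⟨c, d⟩ h
      simp only [Prod.mk.injEq] at h ⊢
      omega
    refine Summable.of_norm_bounded ((p2.comp_injective hinj).mul_left K) fun x => ?_
    simp only [Function.comp, ← zpow_add₀ h0.ne']
    rw [norm_mul, norm_zpow]
    have : x.2 ^ 2 + 0 * x.2 + 0 + ((x.2 - x.1) ^ 2 + 0 * (x.2 - x.1) + 0) =
      x.2 ^ 2 + (x.2 - x.1) ^ 2 := by ring
    rw [this]
    gcongr; apply hK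
  rw [← (Equiv.prodComm ℤ ℤ).tsum_eq]
  have e0 : ∀ x : ℤ × ℤ, q ^ (((Equiv.prodComm ℤ ℤ) x).1 ^ 2 +
      (((Equiv.prodComm ℤ ℤ) x).1 - ((Equiv.prodComm ℤ ℤ) x).2) ^ 2) *
      (U * uu q ((Equiv.prodComm ℤ ℤ) x).2) =
      U * (uu q x.1 * q ^ (x.2 ^ 2 + (x.2 - x.1) ^ 2)) := fun x => by
    simp only [Equiv.prodComm_apply, Prod.fst_swap, Prod.snd_swap]; ring
  rw [tsum_congr e0, Summable.tsum_prod hs, tsum_int_even_odd _ hs.prod, mul_add]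
  congr 1
  · rw [mul_comm (∑' t : ℤ, q ^ (2 * t ^ 2)), ← tsum_mul_right, ← tsum_mul_left]
    refine tsum_congr fun n => ?_
    simp only
    rw [tsum_mul_left, tsum_mul_left, ← (Equiv.addRight n).tsum_eq, mul_comm (q ^ (2 * n ^ 2)),
      mul_assoc, ← tsum_mul_left (a := q ^ (2 * n ^ 2))]
    congr 2
    refine tsum_congr fun t => ?_
    simp only [Equiv.coe_addRight]
    rw [← zpow_add₀ hq0]; congr 1; ring
  · rw [mul_comm (q * _), ← tsum_mul_right, ← tsum_mul_left]
    refine tsum_congr fun n => ?_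
    simp only
    rw [tsum_mul_left, tsum_mul_left, ← (Equiv.addRight (n + 1)).tsum_eq,
      mul_comm (q ^ (2 * n ^ 2 + 2 * n)), mul_assoc, ← mul_assoc _ q, ← zpow_add_one₀ hq0,
      ← tsum_mul_left (a := q ^ (2 * n ^ 2 + 2 * n + 1))]
    congr 2
    refine tsum_congr fun t => ?_
    simp only [Equiv.coe_addRight]
    rw [← zpow_add₀ hq0]; congr 1; ring

lemma norm_pow_lt (q : ℂ) (h1 : ‖q‖ < 1) (n : ℕ) (hn : n ≠ 0) : ‖q ^ n‖ < 1 := by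
  rw [norm_pow]; exact pow_lt_one₀ (norm_nonneg _) h1 hn

lemma th_A (q : ℂ) (h0 : 0 < ‖q‖) (h1 : ‖q‖ < 1) :
    (∑' t : ℤ, q ^ (2 * t ^ 2)) * ((J q 2) ^ 2 * (J q 8) ^ 2) = (J q 4) ^ 5 := by
  obtain ⟨hQ0, hQ1⟩ := sq_norm q h0 h1
  have e := jtp (q ^ 2) 1 hQ0 hQ1 one_ne_zero
  have e1 : ∑' t : ℤ, q ^ (2 * t ^ 2) = ∑' m : ℤ, (q ^ 2) ^ (m ^ 2) * (1 : ℂ) ^ m :=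
    tsum_congr fun t => by rw [sq_zpow, one_zpow, mul_one]
  rw [e1, e]
  have d1 := qpi_dissect (q ^ 2) (q ^ 2) hQ1
  have d2 := qpi_dissect (q ^ 4) (q ^ 4) (norm_pow_lt q h1 4 (by norm_num))
  have d3 := qpi_sq (q ^ 2) (q ^ 4) (norm_pow_lt q h1 4 (by norm_num))
  simp only [← pow_mul, ← pow_add, mul_one, inv_one, J] at *
  norm_num at *
  rw [d1, d2, d3]
  ring

lemma th_B (q : ℂ) (h0 : 0 < ‖q‖) (h1 : ‖q‖ < 1) :
    (∑' t : ℤ, q ^ (2 * t ^ 2 + 2 * t)) * J q 4 = 2 * (J q 8) ^ 2 := by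
  obtain ⟨hQ0, hQ1⟩ := sq_norm q h0 h1
  have hq0 : q ≠ 0 := norm_pos_iff.mp h0
  have e := jtp (q ^ 2) (q ^ 2) hQ0 hQ1 (by positivity)
  have e1 : ∑' t : ℤ, q ^ (2 * t ^ 2 + 2 * t) = ∑' m : ℤ, (q ^ 2) ^ (m ^ 2) * (q ^ 2) ^ m :=
    tsum_congr fun t => by rw [sq_zpow, sq_zpow, zpow_add₀ hq0]
  rw [e1, e, mul_inv_cancel₀ (by positivity)]
  have d1 := qpi_peel (-1) (q ^ 4) (norm_pow_lt q h1 4 (by norm_num))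
  have d3 := qpi_sq (q ^ 4) (q ^ 4) (norm_pow_lt q h1 4 (by norm_num))
  simp only [← pow_mul, ← pow_add, mul_one, J] at *
  norm_num at *
  rw [d1, d3]
  ring

lemma J1_split (q : ℂ) (h1 : ‖q‖ < 1) : J q 1 =
    qPochInf q (q ^ 8) * qPochInf (q ^ 3) (q ^ 8) * qPochInf (q ^ 5) (q ^ 8) *
      qPochInf (q ^ 7) (q ^ 8) * J q 2 := by
  have d1 := qpi_dissect q q h1
  have d2 := qpi_dissect q (q ^ 2) (norm_pow_lt q h1 2 (by norm_num))
  have d3 := qpi_dissect q (q ^ 4) (norm_pow_lt q h1 4 (by norm_num))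
  have d4 := qpi_dissect (q ^ 3) (q ^ 4) (norm_pow_lt q h1 4 (by norm_num))
  have p2 : q * q = q ^ 2 := by ring
  have p3 : q * q ^ 2 = q ^ 3 := by ring
  have p4 : q * q ^ 4 = q ^ 5 := by ring
  simp only [← pow_mul, ← pow_add, p2, p3, p4, J, pow_one] at *
  norm_num at *
  rw [d1, d2, d3, d4]
  ring

lemma th_E (q : ℂ) (h0 : 0 < ‖q‖) (h1 : ‖q‖ < 1) :
    (∑' n : ℤ, q ^ (2 * n ^ 2) * uu q (2 * n)) * (J q 1 * J q 16) = Jam q 1 8 * Jam q 6 16 ∧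
    (∑' n : ℤ, q ^ (2 * n ^ 2 + 2 * n) * uu q (2 * n + 1)) * (J q 1 * J q 16) =
      Jam q 3 8 * Jam q 2 16 := by
  have hq0 : q ≠ 0 := norm_pos_iff.mp h0
  obtain ⟨r, hr⟩ := IsAlgClosed.exists_pow_nat_eq q (n := 2) (by norm_num)
  have hrn : ‖r‖ ^ 2 = ‖q‖ := by rw [← hr, norm_pow]
  have hr0 : 0 < ‖r‖ := by
    rw [norm_pos_iff]; rintro rfl; simp at hr; exact hq0 hr.symm
  have hr1 : ‖r‖ < 1 := by nlinarith
  obtain ⟨s1, s2⟩ := slater r hr0 hr1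
  rw [show r ^ 4 = (r ^ 2) ^ 2 by ring, hr] at s1 s2
  have h4 : ‖q ^ 4‖ < 1 := norm_pow_lt q h1 4 (by norm_num)
  have h8 : ‖q ^ 8‖ < 1 := norm_pow_lt q h1 8 (by norm_num)
  have h40 : 0 < ‖q ^ 4‖ := by rw [norm_pow]; positivity
  have z4 : ∀ n : ℤ, (q ^ 4) ^ n = q ^ (4 * n) := fun n => by rw [zpow_mul]; norm_cast
  have z3 : ∀ n : ℤ, (q ^ 3) ^ n = q ^ (3 * n) := fun n => by rw [zpow_mul]; norm_cast
  have e1 : ∑' n : ℤ, q ^ (4 * n ^ 2 - n) = ∑' m : ℤ, (q ^ 4) ^ (m ^ 2) * (q⁻¹) ^ m :=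
    tsum_congr fun n => by rw [z4, inv_zpow, zpow_sub₀ hq0]; rfl
  have e2 : ∑' n : ℤ, q ^ (4 * n ^ 2 + 3 * n) = ∑' m : ℤ, (q ^ 4) ^ (m ^ 2) * (q ^ 3) ^ m :=
    tsum_congr fun n => by rw [z4, z3, zpow_add₀ hq0]
  rw [e1, jtp _ _ h40 h4 (by positivity)] at s1
  rw [e2, jtp _ _ h40 h4 (by positivity)] at s2
  have a1 : q ^ 4 * q⁻¹ = q ^ 3 := by field_simp
  have a2 : q ^ 4 * (q⁻¹)⁻¹ = q ^ 5 := by rw [inv_inv]; ring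
  have a3 : q ^ 4 * q ^ 3 = q ^ 7 := by ring
  have a4 : q ^ 4 * (q ^ 3)⁻¹ = q := by field_simp
  have a5 : (q ^ 4) ^ 2 = q ^ 8 := by ring
  rw [a1, a2, a5] at s1
  rw [a3, a4, a5] at s2
  have d1 := qpi_sq (q ^ 3) (q ^ 8) h8
  have d2 := qpi_sq (q ^ 5) (q ^ 8) h8
  have d3 := qpi_sq q (q ^ 8) h8
  have d4 := qpi_sq (q ^ 7) (q ^ 8) h8
  rw [J1_split q h1]
  simp only [J, Jam]
  simp only [← pow_mul, pow_one] at *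
  norm_num at *
  rw [d1, d2, d3, d4]
  constructor
  · linear_combination (qPochInf q (q ^ 8) * qPochInf (q ^ 3) (q ^ 8) * qPochInf (q ^ 5) (q ^ 8) *
      qPochInf (q ^ 7) (q ^ 8) * qPochInf (q ^ 16) (q ^ 16)) * s1
  · linear_combination (qPochInf q (q ^ 8) * qPochInf (q ^ 3) (q ^ 8) * qPochInf (q ^ 5) (q ^ 8) *
      qPochInf (q ^ 7) (q ^ 8) * qPochInf (q ^ 16) (q ^ 16)) * s2

lemma nat_to_int (q : ℂ) :
    (∑' p : ℕ × ℕ × ℕ × ℕ,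
      (fun (i j k l : ℕ) =>
        q ^ ((2*(i:ℤ)^2 + 2*(j:ℤ)^2 + 2*(k:ℤ)^2 + 2*(l:ℤ)^2 - 2*(i:ℤ)*(j:ℤ) - 2*(i:ℤ)*(k:ℤ) - 2*(i:ℤ)*(l:ℤ) + 2*(j:ℤ)*(k:ℤ) + 2*(j:ℤ)*(l:ℤ) - (j:ℤ)) : ℤ) /
          (qPoch (q ^ 2) (q ^ 2) i * qPoch (q ^ 2) (q ^ 2) j * qPoch (q ^ 2) (q ^ 2) k * qPoch (q ^ 2) (q ^ 2) l))
        p.1 p.2.1 p.2.2.1 p.2.2.2) =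
    ∑' p : ℤ × ℤ × ℤ × ℤ, q ^ (p.1 ^ 2 + p.2.1 ^ 2 - p.2.1 + (p.1 - p.2.1 - p.2.2.1 - p.2.2.2) ^ 2
        + (p.2.2.1 - p.2.2.2) ^ 2) * uu (q ^ 2) p.1 * uu (q ^ 2) p.2.1 *
        (uu (q ^ 2) p.2.2.1 * uu (q ^ 2) p.2.2.2) := by
  have hinj : Function.Injective (fun p : ℕ × ℕ × ℕ × ℕ =>
      ((p.1 : ℤ), (p.2.1 : ℤ), (p.2.2.1 : ℤ), (p.2.2.2 : ℤ))) := by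
    rintro ⟨a, b, c, d⟩ ⟨a', b', c', d'⟩ h
    simpa using h
  rw [← hinj.tsum_eq]
  · refine tsum_congr fun p => ?_
    obtain ⟨i, j, k, l⟩ := p
    simp only [uu_nat]
    rw [div_eq_mul_inv, mul_inv, mul_inv, mul_inv]
    rw [show (2*(i:ℤ)^2 + 2*(j:ℤ)^2 + 2*(k:ℤ)^2 + 2*(l:ℤ)^2 - 2*(i:ℤ)*(j:ℤ) - 2*(i:ℤ)*(k:ℤ)
      - 2*(i:ℤ)*(l:ℤ) + 2*(j:ℤ)*(k:ℤ) + 2*(j:ℤ)*(l:ℤ) - (j:ℤ)) =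
      (i:ℤ) ^ 2 + (j:ℤ) ^ 2 - j + ((i:ℤ) - j - k - l) ^ 2 + ((k:ℤ) - l) ^ 2 by ring]
    ring
  · rintro ⟨i, j, k, l⟩ h
    rw [Function.mem_support] at h
    have pos : ∀ n : ℤ, uu (q ^ 2) n ≠ 0 → 0 ≤ n := fun n hn => by
      by_contra hlt; exact hn (uu_neg _ (not_le.mp hlt))
    simp only [ne_eq, mul_eq_zero, not_or] at h
    obtain ⟨⟨⟨_, hi⟩, hj⟩, hk, hl⟩ := h
    refine ⟨(i.toNat, j.toNat, k.toNat, l.toNat), ?_⟩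
    have := pos _ hi; have := pos _ hj; have := pos _ hk; have := pos _ hl
    simp only [Prod.mk.injEq]; omega

theorem stmt_7 (q : ℂ) (h0 : 0 < ‖q‖) (h1 : ‖q‖ < 1) :
    (∑' p : ℕ × ℕ × ℕ × ℕ,
      (fun (i j k l : ℕ) =>
        q ^ ((2*(i:ℤ)^2 + 2*(j:ℤ)^2 + 2*(k:ℤ)^2 + 2*(l:ℤ)^2 - 2*(i:ℤ)*(j:ℤ) - 2*(i:ℤ)*(k:ℤ) - 2*(i:ℤ)*(l:ℤ) + 2*(j:ℤ)*(k:ℤ) + 2*(j:ℤ)*(l:ℤ) - (j:ℤ)) : ℤ) /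
          (qPoch (q ^ 2) (q ^ 2) i * qPoch (q ^ 2) (q ^ 2) j * qPoch (q ^ 2) (q ^ 2) k * qPoch (q ^ 2) (q ^ 2) l))
        p.1 p.2.1 p.2.2.1 p.2.2.2)
    = (J q 4)^5 * Jam q 1 8 * Jam q 6 16 / (J q 1 * (J q 2)^3 * (J q 8)^2 * J q 16)
      + 2 * q * (J q 8)^2 * Jam q 3 8 * Jam q 2 16 / (J q 1 * J q 2 * J q 4 * J q 16) := by
  have hJ : ∀ m : ℕ, m ≠ 0 → J q m ≠ 0 := fun m hm =>
    qpi_ne _ _ (norm_pow_lt q h1 m hm) (norm_pow_lt q h1 m hm)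
  have j1 := hJ 1 (by norm_num)
  have j2 := hJ 2 (by norm_num)
  have j4 := hJ 4 (by norm_num)
  have j8 := hJ 8 (by norm_num)
  have j16 := hJ 16 (by norm_num)
  have tA := th_A q h0 h1
  have tB := th_B q h0 h1
  obtain ⟨tE, tO⟩ := th_E q h0 h1
  rw [nat_to_int, chain1 q h0 h1, chain2 q h0 h1]
  rw [← eq_div_iff (by positivity)] at tA tB tE tO
  rw [tA, tB, tE, tO]
  change (J q 2)⁻¹ * _ = _
  field_simp
end
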